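/- arXiv:1502.03415 — 5 statements merged into one kernel-verified Lean document; each statement's English description precedes it below -/
import Mathlib

section
/- (Backstepping case.) Consider the strict-feedback system dy/dt = h₁(y) + h₂(y)x, dx/dt = f(y,x) + g(y,x)u with y ∈ ℝ^{n_y}, x ∈ ℝ, u ∈ ℝ, where h₁, h₂, f, g are smooth, h₁(0) = 0, f(0,0) = 0, and g(y,x) ≠ 0 for all (y,x). Set H₁ := Dh₁(0), H₂ := h₂(0), F₁ := D_y f(0,0), F₂ := ∂f/∂x(0,0), G := g(0,0), and let A be the (n_y+1)×(n_y+1) block matrix [[H₁, H₂],[F₁, F₂]] and B := [0; G]. Assume: for every K_y ∈ ℝ^{1×n_y} and every positive definite P_y ∈ ℝ^{n_y×n_y} with P_y(H₁ + H₂K_y) + (H₁ + H₂K_y)ᵀP_y negative definite, there exists a smooth proper positive definite function V_y: ℝ^{n_y} → ℝ≥0 with (1/2)·H(V_y)(0) = P_y and such that for every y ≠ 0, ∇V_y(y)ᵀh₂(y) = 0 implies ∇V_y(y)·h₁(y) < 0. Then for every K ∈ ℝ^{1×(n_y+1)} such that A + BK is Hurwitz, there exists a smooth map α₀: ℝ^{n_y+1}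 → ℝ with α₀(0) = 0 and Dα₀(0) = K such that the origin of the closed-loop system (dy/dt, dx/dt) = (h₁(y) + h₂(y)x, f(y,x) + g(y,x)α₀(y,x)) is globally asymptotically stable. -/
open Matrix Filter Topology Asymptotics

noncomputable section

/-- `V` is proper: `V χ → ∞` as `‖χ‖ → ∞`. -/
def IsProper {E : Type*} [NormedAddCommGroup E] (V : E → ℝ) : Prop :=
  Filter.Tendsto V (Bornology.cobounded E) Filter.atTop

/-- `V` is positive definite: `V 0 = 0` and `V x > 0` for `x ≠ 0`. -/
def IsPosDefFn {E : Type*} [NormedAddCommGroup E] (V : E → ℝ) : Prop :=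
  V 0 = 0 ∧ ∀ x : E, x ≠ 0 → 0 < V x

/-- The Hessian matrix of `V` at `x`. -/
def hessianAt {n : ℕ} (V : (Fin n → ℝ) → ℝ) (x : Fin n → ℝ) :
    Matrix (Fin n) (Fin n) ℝ :=
  Matrix.of fun i j => iteratedFDeriv ℝ 2 V x ![Pi.single i 1, Pi.single j 1]

/-- A real square matrix is Hurwitz if all of its (complex) eigenvalues have
negative real part. -/
def Hurwitz {ι : Type*} [Fintype ι] [DecidableEq ι] (M : Matrix ι ι ℝ) : Prop :=
  ∀ μ : ℂ, μ ∈ spectrum ℂ (M.map (algebraMap ℝ ℂ)) → μ.re < 0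

/-- Global asymptotic stability of the origin for `χ' = F (χ)`:
(i) Lyapunov stability of the origin, and (ii) for every initial condition there is a
solution defined on all of `[0, ∞)` converging to the origin (for a locally Lipschitz
vector field, by uniqueness of solutions, this is equivalent to requiring every maximal
solution to be defined on `[0,∞)` and to converge to the origin). -/
def IsGAS {E : Type*} [NormedAddCommGroup E] [NormedSpace ℝ E] (F : E → E) : Prop :=
  (∀ ε > 0, ∃ δ > 0, ∀ (χ : ℝ → E) (T : ℝ),
      (∀ t ∈ Set.Ico (0:ℝ) T, HasDerivAt χ (F (χ t)) t) →
      ‖χ 0‖ ≤ δ → ∀ t ∈ Set.Ico (0:ℝ) T, ‖χ t‖ ≤ ε) ∧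
  (∀ x₀ : E, ∃ χ : ℝ → E, χ 0 = x₀ ∧ (∀ t : ℝ, 0 ≤ t → HasDerivAt χ (F (χ t)) t) ∧
      Filter.Tendsto χ Filter.atTop (nhds 0))


open scoped Manifold NNReal in
theorem aux_global_ode {E : Type*} [NormedAddCommGroup E] [NormedSpace ℝ E] [CompleteSpace E]
    (F : E → E) (hF : ContDiff ℝ 1 F) (K L : ℝ≥0) (hK : LipschitzWith K F) (hL : ∀ x, ‖F x‖ ≤ L)
    (x₀ : E) : ∃ χ : ℝ → E, χ 0 = x₀ ∧ ∀ t, HasDerivAt χ (F (χ t)) t := by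
  have h := exists_isMIntegralCurve_of_isMIntegralCurveOn (I := 𝓘(ℝ, E)) (M := E) (v := F)
    (contMDiff_vectorSpace_iff_contDiff.2 hF) (ε := 1) one_pos ?_ x₀
  · obtain ⟨γ, h0, hγ⟩ := h
    refine ⟨γ, h0, fun t => ?_⟩
    have : HasFDerivAt γ ((1 : ℝ →L[ℝ] ℝ).smulRight (F (γ t)) : ℝ →L[ℝ] E) t :=
      (hγ t).hasFDerivAt
    have h2 := this.hasDerivAt
    simp only [ContinuousLinearMap.smulRight_apply, one_apply_eq_self,
      one_smul] at h2
    exact h2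
  · intro x
    have hp : IsPicardLindelof (fun _ => F) (tmin := -1) (tmax := 1) ⟨0, by simp⟩ x L 0 L K := by
      apply IsPicardLindelof.of_time_independent
      · intro y _; exact hL y
      · exact hK.lipschitzOnWith
      · simp
    obtain ⟨γ, h0, hγ⟩ := hp.exists_eq_forall_mem_Icc_hasDerivWithinAt₀
    refine ⟨γ, h0, fun t ht => ?_⟩
    have := (hγ t (Set.Ioo_subset_Icc_self ht)).mono Set.Ioo_subset_Icc_self
    exact this.hasFDerivWithinAt.hasMFDerivWithinAt

theorem aux_decr {E : Type*} [NormedAddCommGroup E] [NormedSpace ℝ E]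
    (F : E → E) (V : E → ℝ) (hV : Differentiable ℝ V) (m : ℝ) (χ : ℝ → E) (D : Set ℝ)
    (hD : Convex ℝ D) (hχ : ∀ t ∈ D, HasDerivAt χ (F (χ t)) t)
    (hm : ∀ t ∈ D, fderiv ℝ V (χ t) (F (χ t)) ≤ -m) :
    AntitoneOn (fun t => V (χ t) + m * t) D := by
  have hd : ∀ t ∈ D, HasDerivAt (fun t => V (χ t) + m * t)
      (fderiv ℝ V (χ t) (F (χ t)) + m) t := by
    intro t ht
    have h1 := (hV (χ t)).hasFDerivAt.comp_hasDerivAt t (hχ t ht)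
    have h2 := (hasDerivAt_id t).const_mul m
    rw [mul_one] at h2
    exact h1.add h2
  apply antitoneOn_of_deriv_nonpos hD
  · exact fun t ht => (hd t ht).continuousAt.continuousWithinAt
  · exact fun t ht => (hd t (interior_subset ht)).differentiableAt.differentiableWithinAt
  · intro t ht
    rw [(hd t (interior_subset ht)).deriv]
    linarith [hm t (interior_subset ht)]

theorem aux_sublevel {E : Type*} [NormedAddCommGroup E] [NormedSpace ℝ E] [FiniteDimensional ℝ E]
    (V : E → ℝ) (hV : Continuous V) (hp : IsProper V) (c : ℝ) : IsCompact {x | V x ≤ c} := by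
  have := FiniteDimensional.proper ℝ E
  apply Metric.isCompact_of_isClosed_isBounded (isClosed_le hV continuous_const)
  rw [Bornology.isBounded_def]
  filter_upwards [hp.eventually_gt_atTop c] with x hx
  simpa using hx

theorem aux_lower {E : Type*} [NormedAddCommGroup E] [NormedSpace ℝ E] [FiniteDimensional ℝ E]
    (V : E → ℝ) (hV : Continuous V) (hp : IsProper V) (hpd : IsPosDefFn V) (ε : ℝ) (hε : 0 < ε) :
    ∃ m > 0, ∀ x, ε ≤ ‖x‖ → m ≤ V x := by
  have hc : IsCompact ({x | V x ≤ 1} ∩ {x | ε ≤ ‖x‖}) :=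
    (aux_sublevel V hV hp 1).inter_right (isClosed_le continuous_const continuous_norm)
  rcases Set.eq_empty_or_nonempty ({x | V x ≤ 1} ∩ {x | ε ≤ ‖x‖}) with he | hne
  · refine ⟨1, one_pos, fun x hx => ?_⟩
    by_contra h
    have : x ∈ ({x | V x ≤ 1} ∩ {x | ε ≤ ‖x‖}) := ⟨(not_le.1 h).le, hx⟩
    rw [he] at this
    exact this
  · obtain ⟨z, hz, hmin⟩ := hc.exists_isMinOn hne hV.continuousOn
    have hz0 : z ≠ 0 := by
      rintro rfl
      have := hz.2
      simp at this
      linarith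
    refine ⟨min 1 (V z), lt_min one_pos (hpd.2 z hz0), fun x hx => ?_⟩
    by_cases h : V x ≤ 1
    · exact (min_le_right _ _).trans (hmin ⟨h, hx⟩)
    · exact (min_le_left _ _).trans (not_le.1 h).le

open scoped Manifold in
theorem aux_gas {E : Type*} [NormedAddCommGroup E] [NormedSpace ℝ E] [FiniteDimensional ℝ E]
    (F : E → E) (hF : ContDiff ℝ 1 F) (hF0 : F 0 = 0) (V : E → ℝ) (hV : ContDiff ℝ 1 V)
    (hp : IsProper V) (hpd : IsPosDefFn V)
    (hdec : ∀ z, z ≠ 0 → fderiv ℝ V z (F z) < 0) : IsGAS F := by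
  have := FiniteDimensional.proper ℝ E
  have : CompleteSpace E := FiniteDimensional.complete ℝ E
  have hVd : Differentiable ℝ V := hV.differentiable (by simp)
  have hdec' : ∀ z, fderiv ℝ V z (F z) ≤ 0 := by
    intro z
    by_cases h : z = 0
    · subst h; simp [hF0]
    · exact (hdec z h).le
  constructor
  · intro ε hε
    obtain ⟨m, hm, hmV⟩ := aux_lower V hV.continuous hp hpd ε hε
    have : ∀ᶠ x in 𝓝 (0:E), V x < m := hV.continuous.continuousAt.eventually_lt
      continuousAt_const (by rw [hpd.1]; exact hm)
    obtain ⟨δ, hδ, hb⟩ := Metric.eventually_nhds_iff.1 this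
    refine ⟨δ / 2, by positivity, fun χ T hχ h0 t ht => ?_⟩
    have hanti := aux_decr F V hVd 0 χ (Set.Ico 0 T) (convex_Ico 0 T) hχ
      (by simpa using fun t _ _ => hdec' _)
    have h1 := hanti (⟨le_rfl, ht.1.trans_lt ht.2⟩ : (0:ℝ) ∈ Set.Ico 0 T) ht ht.1
    have h2 : V (χ 0) < m := hb (by rw [dist_zero_right]; linarith)
    by_contra hcon
    have := hmV _ (not_le.1 hcon).le
    simp at h1
    linarith
  · intro x₀
    have hcpt := aux_sublevel V hV.continuous hp (V x₀)
    obtain ⟨R, hR⟩ := hcpt.isBounded.subset_closedBall 0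
    let R' := max R 1
    have hR'0 : 0 < R' := lt_of_lt_of_le one_pos (le_max_right _ _)
    obtain ⟨φ, hφ1, hφ0, hφI⟩ : ∃ φ : C^1⟮𝓘(ℝ, E), E; 𝓘(ℝ, ℝ), ℝ⟯,
        (∀ᶠ x in 𝓝ˢ (Metric.closedBall (0:E) R'), φ x = 1) ∧
        (∀ x ∉ Metric.closedBall (0:E) (R' + 1), φ x = 0) ∧ ∀ x, φ x ∈ Set.Icc (0:ℝ) 1 :=
      exists_contMDiffMap_one_nhds_of_subset_interior 𝓘(ℝ, E) Metric.isClosed_closedBall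
        ((Metric.closedBall_subset_ball (by linarith)).trans Metric.ball_subset_interior_closedBall)
    have hφc : ContDiff ℝ 1 φ := contMDiff_iff_contDiff.1 φ.contMDiff
    have hφe : ∀ x, V x ≤ V x₀ → φ x = 1 := fun x hx =>
      hφ1.self_of_nhdsSet x (Metric.closedBall_subset_closedBall (le_max_left _ _) (hR hx))
    let G : E → E := fun x => φ x • F x
    have hGc : ContDiff ℝ 1 G := hφc.smul hF
    have hGs : HasCompactSupport G := by
      apply HasCompactSupport.intro (isCompact_closedBall (0:E) (R' + 1))
      intro x hx
      simp [G, hφ0 x hx]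
    obtain ⟨K, hK⟩ := hGc.lipschitzWith_of_hasCompactSupport hGs (by simp)
    obtain ⟨C, hC⟩ := hGs.exists_bound_of_continuous hGc.continuous
    obtain ⟨χ, h0, hχ⟩ := aux_global_ode G hGc K (Real.toNNReal C) hK
      (fun x => (hC x).trans (Real.le_coe_toNNReal C)) x₀
    have hanti := aux_decr G V hVd 0 χ (Set.Ici 0) (convex_Ici 0) (fun t _ => hχ t) (by
      intro t _
      simp only [G, map_smul, smul_eq_mul, neg_zero]
      exact mul_nonpos_of_nonneg_of_nonpos (hφI _).1 (hdec' _))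
    have hle : ∀ t, 0 ≤ t → V (χ t) ≤ V x₀ := by
      intro t ht
      have := hanti (Set.mem_Ici.2 le_rfl) (Set.mem_Ici.2 ht) ht
      simpa [h0] using this
    have hχF : ∀ t : ℝ, 0 ≤ t → HasDerivAt χ (F (χ t)) t := by
      intro t ht
      have := hχ t
      simpa [G, hφe _ (hle t ht)] using this
    refine ⟨χ, h0, hχF, ?_⟩
    have hsmall : ∀ c > 0, ∃ t, 0 ≤ t ∧ V (χ t) < c := by
      intro c hc
      by_contra! hcon
      have hcc : IsCompact ({x | V x ≤ V x₀} ∩ {x | c ≤ V x}) :=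
        hcpt.inter_right (isClosed_le continuous_const hV.continuous)
      have hcont : Continuous fun z => fderiv ℝ V z (F z) :=
        (hV.continuous_fderiv (by simp)).clm_apply hF.continuous
      obtain ⟨z, hz, hmax⟩ := hcc.exists_isMaxOn ⟨x₀, le_refl (V x₀), by
        simpa [h0] using hcon 0 le_rfl⟩ hcont.continuousOn
      have hz0 : z ≠ 0 := by
        rintro rfl
        have := hz.2
        simp [hpd.1] at this
        linarith
      have hneg := hdec z hz0
      set m := - fderiv ℝ V z (F z) with hm
      have hmpos : 0 < m := by linarith
      have han := aux_decr F V hVd m χ (Set.Ici 0) (convex_Ici 0) hχF (by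
        intro t ht
        rw [hm, neg_neg]
        exact hmax ⟨hle t ht, hcon t ht⟩)
      have hT : 0 ≤ V x₀ / m := by
        apply div_nonneg _ hmpos.le
        have := hcon 0 le_rfl
        rw [h0] at this
        linarith
      have h1 := han (Set.mem_Ici.2 le_rfl) (Set.mem_Ici.2 hT) hT
      have h2 := hcon _ hT
      simp only [h0, mul_zero, add_zero, mul_div_cancel₀ _ hmpos.ne'] at h1
      linarith
    rw [Metric.tendsto_atTop]
    intro ε hε
    obtain ⟨m, hm, hmV⟩ := aux_lower V hV.continuous hp hpd ε hε
    obtain ⟨T, hT, hVT⟩ := hsmall m hm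
    refine ⟨T, fun t ht => ?_⟩
    rw [dist_zero_right]
    by_contra hcon
    have h1 := hmV _ (not_lt.1 hcon)
    have h2 := hanti (Set.mem_Ici.2 hT) (Set.mem_Ici.2 (hT.trans ht)) ht
    simp at h2
    linarith

theorem aux_quad {E : Type*} [NormedAddCommGroup E] [NormedSpace ℝ E] [FiniteDimensional ℝ E]
    (B : E →L[ℝ] E →L[ℝ] ℝ) (M : E →L[ℝ] E) (h : ∀ v, v ≠ 0 → B v (M v) < 0) :
    ∃ c > 0, ∀ v, B v (M v) ≤ - c * ‖v‖ ^ 2 := by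
  have := FiniteDimensional.proper ℝ E
  have hcont : Continuous fun v => B v (M v) := B.continuous.clm_apply M.continuous
  rcases Set.eq_empty_or_nonempty (Metric.sphere (0:E) 1) with he | hne
  · refine ⟨1, one_pos, fun v => ?_⟩
    by_cases hv : v = 0
    · simp [hv]
    · exfalso
      have : (‖v‖⁻¹ • v) ∈ Metric.sphere (0:E) 1 := by
        simp [norm_smul, inv_mul_cancel₀ (norm_ne_zero_iff.2 hv)]
      rw [he] at this
      exact this
  · obtain ⟨z, hz, hmax⟩ := (isCompact_sphere (0:E) 1).exists_isMaxOn hne hcont.continuousOn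
    have hz0 : z ≠ 0 := by
      rintro rfl
      simp at hz
    refine ⟨- B z (M z), by linarith [h z hz0], fun v => ?_⟩
    by_cases hv : v = 0
    · simp [hv]
    · have hvn := norm_ne_zero_iff.2 hv
      have hm : (‖v‖⁻¹ • v) ∈ Metric.sphere (0:E) 1 := by
        simp [norm_smul, inv_mul_cancel₀ hvn]
      have := hmax hm
      simp only [Set.mem_ofPred_eq, map_smul, _root_.smul_apply, smul_eq_mul] at this
      have h2 : B v (M v) = ‖v‖ ^ 2 * (‖v‖⁻¹ * (‖v‖⁻¹ * B v (M v))) := by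
        field_simp
      rw [h2, neg_neg, mul_comm]
      gcongr

theorem aux_local {E : Type*} [NormedAddCommGroup E] [NormedSpace ℝ E] [FiniteDimensional ℝ E]
    (B : E →L[ℝ] E →L[ℝ] ℝ) (M : E →L[ℝ] E) (h : ∀ v, v ≠ 0 → B v (M v) < 0)
    (D : E → E →L[ℝ] ℝ) (F : E → E) (hD : HasFDerivAt D B 0) (hD0 : D 0 = 0)
    (hF : HasFDerivAt F M 0) (hF0 : F 0 = 0) :
    ∀ᶠ z in 𝓝 (0:E), z ≠ 0 → D z (F z) < 0 := by
  obtain ⟨c, hc, hB⟩ := aux_quad B M h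
  set q := ‖M‖ + 1 + ‖B‖ with hq
  have hqpos : 0 < q := by positivity
  set η := min 1 (c / (2 * q)) with hη
  have hηpos : 0 < η := lt_min one_pos (by positivity)
  have h1 := hD.isLittleO.def hηpos
  have h2 := hF.isLittleO.def hηpos
  filter_upwards [h1, h2] with z h1 h2 hz
  simp only [hD0, hF0, sub_zero] at h1 h2
  have hzpos : 0 < ‖z‖ := norm_pos_iff.2 hz
  have e : D z (F z) = B z (M z) + ((D z - B z) (M z) + (D z - B z) (F z - M z)
      + B z (F z - M z)) := by
    simp only [map_sub, _root_.sub_apply]; ring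
  have b1 : (D z - B z) (M z) ≤ (η * ‖z‖) * (‖M‖ * ‖z‖) :=
    (le_abs_self _).trans <| ((D z - B z).le_opNorm _).trans <| by
      gcongr
      exact M.le_opNorm z
  have b2 : (D z - B z) (F z - M z) ≤ (η * ‖z‖) * (1 * ‖z‖) :=
    (le_abs_self _).trans <| ((D z - B z).le_opNorm _).trans <| by
      gcongr
      exact h2.trans (by gcongr; exact min_le_left _ _)
  have b3 : B z (F z - M z) ≤ (‖B‖ * ‖z‖) * (η * ‖z‖) :=
    (le_abs_self _).trans <| ((B z).le_opNorm _).trans <| by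
      gcongr
      exact B.le_opNorm z
  have hηq : η * q ≤ c / 2 := by
    calc η * q ≤ (c / (2 * q)) * q := by gcongr; exact min_le_right _ _
      _ = c / 2 := by field_simp
  have hz2 : 0 < ‖z‖ ^ 2 := by positivity
  have hBz := hB z
  have : (η * q) * ‖z‖ ^ 2 ≤ c / 2 * ‖z‖ ^ 2 := by gcongr
  rw [e]
  have e2 : (η * q) * ‖z‖ ^ 2 = (η * ‖z‖) * (‖M‖ * ‖z‖) + (η * ‖z‖) * (1 * ‖z‖)
    + (‖B‖ * ‖z‖) * (η * ‖z‖) := by rw [hq]; ring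
  have : 0 < c * ‖z‖ ^ 2 := by positivity
  linarith

open scoped Manifold in
theorem aux_clf {E : Type*} [NormedAddCommGroup E] [NormedSpace ℝ E] [FiniteDimensional ℝ E]
    (F G : E → E) (hF : ContDiff ℝ (⊤ : ℕ∞) F) (hG : ContDiff ℝ (⊤ : ℕ∞) G) (hF0 : F 0 = 0)
    (V : E → ℝ) (hV : ContDiff ℝ (⊤ : ℕ∞) V) (hpd : IsPosDefFn V) (K : E →L[ℝ] ℝ)
    (hloc : ∀ v, v ≠ 0 → fderiv ℝ (fderiv ℝ V) 0 v (fderiv ℝ F 0 v + K v • G 0) < 0)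
    (hclf : ∀ z, z ≠ 0 → fderiv ℝ V z (G z) = 0 → fderiv ℝ V z (F z) < 0) :
    ∃ α : E → ℝ, ContDiff ℝ (⊤ : ℕ∞) α ∧ (∀ᶠ z in 𝓝 0, α z = K z) ∧
      ∀ z, z ≠ 0 → fderiv ℝ V z (F z + α z • G z) < 0 := by
  have hV1 : ContDiff ℝ 1 (fderiv ℝ V) := hV.fderiv_right (by norm_cast)
  have hV0 : fderiv ℝ V 0 = 0 := by
    apply IsLocalMin.fderiv_eq_zero
    filter_upwards with z
    by_cases h : z = 0
    · rw [h]
    · rw [hpd.1]; exact (hpd.2 z h).le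
  have hFd : DifferentiableAt ℝ F 0 := (hF.differentiable (by simp)) 0
  have hGd : DifferentiableAt ℝ G 0 := (hG.differentiable (by simp)) 0
  have hev : ∀ᶠ z in 𝓝 (0:E), z ≠ 0 → fderiv ℝ V z (F z + K z • G z) < 0 := by
    have hd : HasFDerivAt (fun z => F z + K z • G z)
      (fderiv ℝ F 0 + (K 0 • fderiv ℝ G 0 + K.smulRight (G 0))) 0 :=
      hFd.hasFDerivAt.add (K.hasFDerivAt.smul hGd.hasFDerivAt)
    refine aux_local (fderiv ℝ (fderiv ℝ V) 0) _ ?_ (fderiv ℝ V) _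
      ((hV1.differentiable (by simp)) 0).hasFDerivAt hV0 hd (by simp [hF0])
    intro v hv
    simpa using hloc v hv
  obtain ⟨R, hR, hball⟩ := Metric.eventually_nhds_iff_ball.1 hev
  let t : E → Set ℝ := fun z => {u | (‖z‖ ≤ R / 2 → u = K z) ∧
    (z ≠ 0 → fderiv ℝ V z (F z + u • G z) < 0)}
  have ht : ∀ z, Convex ℝ (t z) := by
    intro z u hu w hw a b ha hb hab
    refine ⟨fun hz => ?_, fun hz => ?_⟩
    · rw [hu.1 hz, hw.1 hz, ← add_smul, hab, one_smul]
    · have h1 := hu.2 hz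
      have h2 := hw.2 hz
      have e : fderiv ℝ V z (F z + (a • u + b • w) • G z) =
        a * fderiv ℝ V z (F z + u • G z) + b * fderiv ℝ V z (F z + w • G z) := by
        have hb : b = 1 - a := by linarith
        subst hb
        simp only [map_add, map_smul, smul_eq_mul]
        ring
      rw [e]
      rcases ha.eq_or_lt with rfl | ha'
      · have : b = 1 := by linarith
        subst this
        linarith
      · nlinarith [mul_pos_of_neg_of_neg h1 (neg_lt_zero.2 ha'), mul_nonneg hb (neg_pos.2 h2).le]
  obtain ⟨α, hα⟩ := exists_contMDiffMap_forall_mem_convex_of_local (n := (⊤ : ℕ∞))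
    (I := 𝓘(ℝ, E)) (t := t) ht (by
    intro z
    by_cases hz : ‖z‖ < R
    · refine ⟨Metric.ball 0 R, Metric.isOpen_ball.mem_nhds (by simpa using hz), K,
        K.contDiff.contMDiff.contMDiffOn, fun y hy => ⟨fun _ => rfl, fun hy0 => hball y hy hy0⟩⟩
    · have hz0 : z ≠ 0 := by
        rintro rfl
        simp at hz; linarith
      obtain ⟨u, hu⟩ : ∃ u : ℝ, fderiv ℝ V z (F z + u • G z) < 0 := by
        by_cases hg : fderiv ℝ V z (G z) = 0
        · exact ⟨0, by simpa using hclf z hz0 hg⟩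
        · refine ⟨(- fderiv ℝ V z (F z) - 1) / fderiv ℝ V z (G z), ?_⟩
          rw [map_add, map_smul, smul_eq_mul, div_mul_cancel₀ _ hg]
          linarith
      have hcont : Continuous fun y => fderiv ℝ V y (F y + u • G y) :=
        hV1.continuous.clm_apply (hF.continuous.add (hG.continuous.const_smul u))
      refine ⟨{y | R / 2 < ‖y‖} ∩ {y | fderiv ℝ V y (F y + u • G y) < 0},
        ((isOpen_lt continuous_const continuous_norm).inter
          (isOpen_lt hcont continuous_const)).mem_nhds ⟨?_, hu⟩, fun _ => u,
          contMDiffOn_const, fun y hy => ⟨fun h => absurd hy.1 (not_lt.2 h), fun _ => hy.2⟩⟩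
      simp only [Set.mem_ofPred_eq]
      linarith)
  refine ⟨α, contMDiff_iff_contDiff.1 α.contMDiff, ?_, fun z hz => (hα z).2 hz⟩
  rw [Metric.eventually_nhds_iff_ball]
  refine ⟨R / 2, by positivity, fun z hz => (hα z).1 ?_⟩
  rw [mem_ball_zero_iff] at hz
  exact hz.le

theorem aux_cayley {ι : Type*} [Fintype ι] [DecidableEq ι] (M C : Matrix ι ι ℂ)
    (hM : ∀ μ ∈ spectrum ℂ M, μ.re < 0) (hC : C * (1 - M) = 1 + M) (hu : IsUnit (1 - M)) :
    ∀ μ ∈ spectrum ℂ C, ‖μ‖ < 1 := by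
  intro μ hμ
  rw [spectrum.mem_iff] at hμ
  have h1 : ¬ IsUnit ((μ - 1) • (1 : Matrix ι ι ℂ) - (μ + 1) • M) := by
    intro h
    apply hμ
    have e : (μ - 1) • (1 : Matrix ι ι ℂ) - (μ + 1) • M
        = (algebraMap ℂ (Matrix ι ι ℂ) μ - C) * (1 - M) := by
      rw [sub_mul, hC, Algebra.algebraMap_eq_smul_one, smul_mul_assoc, one_mul]
      module
    rw [e] at h
    obtain ⟨w, hw⟩ := hu
    rw [← hw] at h
    exact (Units.isUnit_mul_units _ w).1 h
  by_cases hμ1 : μ + 1 = 0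
  · exfalso
    apply h1
    have : μ = -1 := by linear_combination hμ1
    subst this
    have : ((-1 : ℂ) - 1) • (1 : Matrix ι ι ℂ) - ((-1 : ℂ) + 1) • M = (-2 : ℂ) • 1 := by
      norm_num
    rw [this]
    exact (isUnit_one).smul (Units.mk0 (-2 : ℂ) (by norm_num))
  · have hν : (μ - 1) / (μ + 1) ∈ spectrum ℂ M := by
      rw [spectrum.mem_iff]
      intro h
      apply h1
      have e : (μ - 1) • (1 : Matrix ι ι ℂ) - (μ + 1) • M
        = (Units.mk0 (μ + 1) hμ1) • (algebraMap ℂ (Matrix ι ι ℂ) ((μ - 1) / (μ + 1)) - M) := by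
        rw [Units.smul_mk0, smul_sub, Algebra.algebraMap_eq_smul_one, smul_smul,
          mul_div_cancel₀ _ hμ1]
      rw [e]
      exact h.smul _
    have hre := hM _ hν
    rw [Complex.div_re, ← add_div] at hre
    have hpos : 0 < Complex.normSq (μ + 1) := Complex.normSq_pos.2 hμ1
    have hneg := (div_neg_iff.1 hre).resolve_left (fun h => absurd h.2 (not_lt.2 hpos.le))
    have hneg := hneg.1
    simp at hneg
    have : ‖μ‖ ^ 2 < 1 := by
      rw [Complex.sq_norm, Complex.normSq_apply]
      nlinarith
    by_contra hcon
    nlinarith [not_lt.1 hcon]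

open scoped Matrix.Norms.L2Operator in
theorem aux_pow {ι : Type*} [Fintype ι] [DecidableEq ι] [Nonempty ι] (C : Matrix ι ι ℝ)
    (h : ∀ μ ∈ spectrum ℂ (C.map (algebraMap ℝ ℂ)), ‖μ‖ < 1) :
    ∃ n : ℕ, 1 ≤ n ∧ (1 - (C ^ n)ᵀ * (C ^ n)).PosDef := by
  have hr : spectralRadius ℂ (C.map (algebraMap ℝ ℂ)) < (1 : NNReal) := by
    apply spectrum.spectralRadius_lt_of_forall_lt
    intro z hz
    exact_mod_cast h z hz
  have hlim := spectrum.pow_nnnorm_pow_one_div_tendsto_nhds_spectralRadius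
    (C.map (algebraMap ℝ ℂ))
  obtain ⟨n, hn, hn1⟩ := ((hlim.eventually_lt_const hr).and (eventually_ge_atTop 1)).exists
  refine ⟨n, hn1, ?_⟩
  have hnpos : (0:ℝ) < n := by exact_mod_cast hn1
  have hnorm : ‖(C.map (algebraMap ℝ ℂ)) ^ n‖ < 1 := by
    by_contra hcon
    push Not at hcon
    have : (1 : ENNReal) ≤ (‖(C.map (algebraMap ℝ ℂ)) ^ n‖₊ : ENNReal) := by
      exact_mod_cast hcon
    have := ENNReal.one_le_rpow this (z := 1 / n) (by positivity)
    exact absurd hn (not_lt.2 (by simpa using this))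
  have hmap : (C.map (algebraMap ℝ ℂ)) ^ n = (C ^ n).map (algebraMap ℝ ℂ) := by
    rw [← RingHom.mapMatrix_apply, ← RingHom.mapMatrix_apply, map_pow]
  rw [hmap] at hnorm
  generalize C ^ n = D at hnorm
  apply Matrix.PosDef.of_dotProduct_mulVec_pos
  · simp [Matrix.IsHermitian, Matrix.conjTranspose_eq_transpose_of_trivial]
  · intro v hv
    have key : ∀ w : ι → ℝ, ‖WithLp.toLp 2 (fun i => (w i : ℂ))‖ ^ 2 = w ⬝ᵥ w := by
      intro w
      rw [EuclideanSpace.norm_sq_eq]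
      simp [dotProduct, sq]
    have h1 := Matrix.l2_opNorm_mulVec (D.map (algebraMap ℝ ℂ))
      (WithLp.toLp 2 (fun i => (v i : ℂ)))
    have e : (D.map (algebraMap ℝ ℂ)) *ᵥ (fun i => (v i : ℂ)) = fun i => ((D *ᵥ v) i : ℂ) := by
      ext i
      simp [Matrix.mulVec, dotProduct]
    simp only [e] at h1
    have hvpos : 0 < v ⬝ᵥ v := by
      have := (Matrix.PosDef.one (n := ι) (R := ℝ)).dotProduct_mulVec_pos hv
      simpa using this
    have hvn : 0 < ‖WithLp.toLp 2 (fun i => (v i : ℂ))‖ := by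
      have := key v
      by_contra hcon
      have h0 : ‖WithLp.toLp 2 (fun i => (v i : ℂ))‖ = 0 := le_antisymm (not_lt.1 hcon) (norm_nonneg _)
      rw [h0] at this
      simp at this
      linarith
    have h2 : ‖WithLp.toLp 2 (fun i => ((D *ᵥ v) i : ℂ))‖ < ‖WithLp.toLp 2 (fun i => (v i : ℂ))‖ :=
      h1.trans_lt (by nlinarith)
    have h3 := pow_lt_pow_left₀ h2 (norm_nonneg _) two_ne_zero
    rw [key, key] at h3
    have e2 : v ⬝ᵥ ((Dᵀ * D) *ᵥ v) = (D *ᵥ v) ⬝ᵥ (D *ᵥ v) := by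
      rw [← Matrix.mulVec_mulVec, Matrix.dotProduct_mulVec, Matrix.vecMul_transpose]
    rw [star_trivial, Matrix.sub_mulVec, dotProduct_sub, e2, Matrix.one_mulVec]
    linarith

theorem aux_lyap {ι : Type*} [Fintype ι] [DecidableEq ι] [Nonempty ι] (M : Matrix ι ι ℝ)
    (h : Hurwitz M) :
    ∃ P : Matrix ι ι ℝ, P.PosDef ∧ (-(P * M + Mᵀ * P)).PosDef := by
  have hmm : (1 - M).map (algebraMap ℝ ℂ) = 1 - M.map (algebraMap ℝ ℂ) := by
    rw [← RingHom.mapMatrix_apply, ← RingHom.mapMatrix_apply, map_sub, map_one]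
  have huC : IsUnit (1 - M.map (algebraMap ℝ ℂ)) := by
    by_contra hcon
    have : (1 : ℂ) ∈ spectrum ℂ (M.map (algebraMap ℝ ℂ)) := by
      rw [spectrum.mem_iff, map_one]
      exact hcon
    have := h 1 this
    simp at this
    linarith
  have hu : IsUnit (1 - M) := by
    rw [Matrix.isUnit_iff_isUnit_det] at huC ⊢
    rw [← hmm, ← RingHom.mapMatrix_apply, ← RingHom.map_det] at huC
    rw [isUnit_iff_ne_zero] at huC ⊢
    intro h0
    rw [h0] at huC
    simp at huC
  obtain ⟨W, hW⟩ := hu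
  set C : Matrix ι ι ℝ := (1 + M) * (W⁻¹ : (Matrix ι ι ℝ)ˣ) with hCdef
  have hC : C * (1 - M) = 1 + M := by
    rw [hCdef, ← hW, mul_assoc, Units.inv_mul, mul_one]
  have hsp := aux_cayley (M.map (algebraMap ℝ ℂ)) (C.map (algebraMap ℝ ℂ)) h (by
    have := congrArg (RingHom.mapMatrix (algebraMap ℝ ℂ)) hC
    simpa only [map_mul, map_sub, map_add, map_one, RingHom.mapMatrix_apply] using this) huC
  obtain ⟨n, hn, hpos⟩ := aux_pow C hsp
  let P : ℕ → Matrix ι ι ℝ := fun n => ∑ k ∈ Finset.range n, (C ^ k)ᵀ * C ^ k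
  have htel : ∀ n, P n - Cᵀ * P n * C = 1 - (C ^ n)ᵀ * C ^ n := by
    intro n
    induction n with
    | zero => simp [P]
    | succ k ih =>
      have e : P (k + 1) = P k + (C ^ k)ᵀ * C ^ k := Finset.sum_range_succ _ _
      rw [e, mul_add, add_mul]
      have e2 : (C ^ (k + 1))ᵀ * C ^ (k + 1) = Cᵀ * ((C ^ k)ᵀ * C ^ k) * C := by
        rw [pow_succ, Matrix.transpose_mul]
        simp only [mul_assoc]
      rw [e2, add_sub_add_comm, ih]
      abel
  have hP : (P n).PosDef := by
    obtain ⟨m, rfl⟩ : ∃ m, n = m + 1 := ⟨n - 1, by omega⟩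
    have e : P (m + 1) = (∑ k ∈ Finset.range m, (C ^ (k+1))ᵀ * C ^ (k+1)) + 1 := by
      simp [P, Finset.sum_range_succ']
    rw [e]
    apply Matrix.PosDef.posSemidef_add _ Matrix.PosDef.one
    apply Matrix.posSemidef_sum
    intro k _
    have := Matrix.posSemidef_conjTranspose_mul_self (C ^ (k+1))
    rwa [Matrix.conjTranspose_eq_transpose_of_trivial] at this
  refine ⟨P n, hP, ?_⟩
  rw [← htel n] at hpos
  have hS := hpos.conjTranspose_mul_mul_same (B := 1 - M)
    (Matrix.mulVec_injective_of_isUnit ⟨W, hW⟩)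
  rw [Matrix.conjTranspose_eq_transpose_of_trivial] at hS
  have e : -(P n * M + Mᵀ * P n) = (1/2 : ℝ) •
      ((1 - M)ᵀ * (P n - Cᵀ * P n * C) * (1 - M)) := by
    have e1 : (1 - M)ᵀ * (P n - Cᵀ * P n * C) * (1 - M) =
      (1 - M)ᵀ * P n * (1 - M) - (C * (1 - M))ᵀ * P n * (C * (1 - M)) := by
      have : ∀ Z D Q : Matrix ι ι ℝ, Zᵀ * (Q - Dᵀ * Q * D) * Z =
          Zᵀ * Q * Z - (D * Z)ᵀ * Q * (D * Z) := by
        intro Z D Q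
        rw [Matrix.transpose_mul]
        noncomm_ring
      exact this _ _ _
    rw [e1, hC]
    simp only [Matrix.transpose_sub, Matrix.transpose_add, Matrix.transpose_one]
    have e3 : (1 - Mᵀ) * P n * (1 - M) - (1 + Mᵀ) * P n * (1 + M) =
      (2:ℝ) • (-(P n * M + Mᵀ * P n)) := by
      rw [two_smul]
      noncomm_ring
    rw [e3, smul_smul]
    norm_num
  rw [e]
  exact hS.smul (by norm_num)

theorem aux_block {n : ℕ} (P : Matrix (Fin n ⊕ Fin 1) (Fin n ⊕ Fin 1) ℝ) (hP : P.PosDef) :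
    ∃ (p : ℝ) (Ky : Fin n → ℝ) (Py : Matrix (Fin n) (Fin n) ℝ), 0 < p ∧ Pyᵀ = Py ∧
      ∀ (y : Fin n → ℝ) (x : ℝ) (w : Fin n → ℝ) (u : ℝ),
        (Sum.elim y (fun _ => x)) ⬝ᵥ P *ᵥ (Sum.elim w (fun _ => u)) =
          y ⬝ᵥ Py *ᵥ w + p * (x - Ky ⬝ᵥ y) * (u - Ky ⬝ᵥ w) := by
  have hsym : Pᵀ = P := by
    have := hP.isHermitian
    rwa [Matrix.IsHermitian, Matrix.conjTranspose_eq_transpose_of_trivial] at this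
  have hp : 0 < P (Sum.inr 0) (Sum.inr 0) := hP.diag_pos
  set p := P (Sum.inr 0) (Sum.inr 0) with hpdef
  set q : Fin n → ℝ := fun i => P (Sum.inl i) (Sum.inr 0) with hq
  have hq' : ∀ i, P (Sum.inr 0) (Sum.inl i) = q i := fun i =>
    congrFun (congrFun hsym (Sum.inl i)) (Sum.inr 0)
  have h11 : P.toBlocks₁₁ᵀ = P.toBlocks₁₁ := by
    ext i j
    exact congrFun (congrFun hsym (Sum.inl i)) (Sum.inl j)
  refine ⟨p, -(p⁻¹ • q), P.toBlocks₁₁ - p⁻¹ • Matrix.vecMulVec q q, hp, ?_, ?_⟩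
  · rw [Matrix.transpose_sub, Matrix.transpose_smul, Matrix.transpose_vecMulVec, h11]
  · intro y x w u
    have e1 : P *ᵥ (Sum.elim w (fun _ => u)) =
        Sum.elim (P.toBlocks₁₁ *ᵥ w + u • q) (fun _ => q ⬝ᵥ w + p * u) := by
      ext (i | i)
      · simp [Matrix.mulVec, dotProduct, Matrix.toBlocks₁₁, hq, mul_comm]
      · have : i = 0 := Subsingleton.elim _ _
        subst this
        simp [Matrix.mulVec, dotProduct, hq', hpdef]
    rw [e1]
    have e2 : ∀ (a : Fin n → ℝ) (b : ℝ), (Sum.elim y (fun _ : Fin 1 => x)) ⬝ᵥ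
        (Sum.elim a (fun _ => b)) = y ⬝ᵥ a + x * b := by
      intro a b
      simp [dotProduct]
    rw [e2, Matrix.sub_mulVec, Matrix.smul_mulVec, Matrix.vecMulVec_mulVec]
    simp only [dotProduct_add, dotProduct_sub, dotProduct_smul, smul_eq_mul, neg_dotProduct,
      smul_dotProduct, op_smul_eq_smul]
    rw [dotProduct_comm y q]
    field_simp
    ring

theorem aux_sym {ι : Type*} [Fintype ι] (P M : Matrix ι ι ℝ) (hP : Pᵀ = P) (z : ι → ℝ) :
    z ⬝ᵥ (-(P * M + Mᵀ * P)) *ᵥ z = -2 * (z ⬝ᵥ P *ᵥ (M *ᵥ z)) := by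
  have e : z ⬝ᵥ (Mᵀ * P) *ᵥ z = z ⬝ᵥ P *ᵥ (M *ᵥ z) := by
    rw [← Matrix.mulVec_mulVec, Matrix.dotProduct_mulVec, Matrix.vecMul_transpose,
      Matrix.dotProduct_mulVec z P, ← Matrix.mulVec_transpose, hP, dotProduct_comm]
  rw [Matrix.neg_mulVec, dotProduct_neg, Matrix.add_mulVec, dotProduct_add, e,
    ← Matrix.mulVec_mulVec]
  ring

theorem aux_hess {n : ℕ} (V : (Fin n → ℝ) → ℝ) (Py : Matrix (Fin n) (Fin n) ℝ)
    (h : ((1:ℝ)/2) • hessianAt V 0 = Py) (v w : Fin n → ℝ) :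
    fderiv ℝ (fderiv ℝ V) 0 v w = 2 * (v ⬝ᵥ Py *ᵥ w) := by
  have hh : ∀ i j, fderiv ℝ (fderiv ℝ V) 0 (Pi.single i 1) (Pi.single j 1) = 2 * Py i j := by
    intro i j
    rw [← h]
    simp [hessianAt, iteratedFDeriv_two_apply]
  have hv : ∀ v : Fin n → ℝ, v = ∑ i, v i • (Pi.single i (1:ℝ) : Fin n → ℝ) := by
    intro v
    ext j
    simp [Finset.sum_apply, Pi.single_apply]
  conv_lhs => rw [hv v, hv w]
  simp only [map_sum, map_smul, _root_.sum_apply, _root_.smul_apply, hh, smul_eq_mul,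
    dotProduct, Matrix.mulVec, Finset.mul_sum]
  rw [Finset.sum_comm]
  refine Finset.sum_congr rfl fun i _ => Finset.sum_congr rfl fun j _ => ?_
  ring

theorem aux_proper {E : Type*} [NormedAddCommGroup E] [NormedSpace ℝ E] [FiniteDimensional ℝ E]
    (V : E → ℝ) (hV : Continuous V) (hp : IsProper V) (α : E → ℝ) (hα : Continuous α)
    (hnn : ∀ y, 0 ≤ V y) (p : ℝ) (hpp : 0 < p) :
    IsProper (fun z : E × ℝ => V z.1 + p * (z.2 - α z.1) ^ 2) := by
  unfold IsProper
  rw [tendsto_atTop]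
  intro c
  have hc := (((aux_sublevel V hV hp c).prod (isCompact_Icc (a := -(c / p + 1))
    (b := c / p + 1))).image (f := fun w : E × ℝ => (w.1, w.2 + α w.1)) (by fun_prop)).isBounded
  rw [Bornology.isBounded_def] at hc
  filter_upwards [hc] with z hz
  by_contra hcon
  apply hz
  push Not at hcon
  have h1 := hnn z.1
  have h2 : 0 ≤ p * (z.2 - α z.1) ^ 2 := by positivity
  have h3 : (z.2 - α z.1) ^ 2 ≤ c / p := by
    rw [le_div_iff₀ hpp]; linarith
  refine ⟨(z.1, z.2 - α z.1), ⟨?_, ?_, ?_⟩, by simp⟩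
  · change V z.1 ≤ c
    linarith
  · change -(c / p + 1) ≤ z.2 - α z.1
    nlinarith [sq_nonneg (z.2 - α z.1 + 1)]
  · change z.2 - α z.1 ≤ c / p + 1
    nlinarith [sq_nonneg (z.2 - α z.1 - 1)]

theorem aux_backstep {E : Type*} [NormedAddCommGroup E] [NormedSpace ℝ E]
    (V α : E → ℝ) (hV : ContDiff ℝ (⊤ : ℕ∞) V) (hα : ContDiff ℝ (⊤ : ℕ∞) α) (p : ℝ) :
    (∀ z w : E × ℝ, fderiv ℝ (fun z : E × ℝ => V z.1 + p * (z.2 - α z.1) ^ 2) z w =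
      fderiv ℝ V z.1 w.1 + 2 * p * (z.2 - α z.1) * (w.2 - fderiv ℝ α z.1 w.1)) ∧
    (α 0 = 0 → ∀ v w : E × ℝ,
      fderiv ℝ (fderiv ℝ (fun z : E × ℝ => V z.1 + p * (z.2 - α z.1) ^ 2)) 0 v w =
      fderiv ℝ (fderiv ℝ V) 0 v.1 w.1 +
        2 * p * (v.2 - fderiv ℝ α 0 v.1) * (w.2 - fderiv ℝ α 0 w.1)) := by
  have hVd : Differentiable ℝ V := hV.differentiable (by simp)
  have hαd : Differentiable ℝ α := hα.differentiable (by simp)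
  have hV1 : Differentiable ℝ (fderiv ℝ V) :=
    (hV.fderiv_right (m := 1) (by norm_cast)).differentiable (by simp)
  have hα1 : Differentiable ℝ (fderiv ℝ α) :=
    (hα.fderiv_right (m := 1) (by norm_cast)).differentiable (by simp)
  have he : ∀ z : E × ℝ, HasFDerivAt (fun z : E × ℝ => z.2 - α z.1)
      (ContinuousLinearMap.snd ℝ E ℝ - (fderiv ℝ α z.1).comp (ContinuousLinearMap.fst ℝ E ℝ)) z :=
    fun z => hasFDerivAt_snd.sub ((hαd z.1).hasFDerivAt.comp z hasFDerivAt_fst)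
  have hfirst : ∀ z w : E × ℝ,
      fderiv ℝ (fun z : E × ℝ => V z.1 + p * (z.2 - α z.1) ^ 2) z w =
      fderiv ℝ V z.1 w.1 + 2 * p * (z.2 - α z.1) * (w.2 - fderiv ℝ α z.1 w.1) := by
    intro z w
    have h1 : HasFDerivAt (fun z : E × ℝ => V z.1)
        ((fderiv ℝ V z.1).comp (ContinuousLinearMap.fst ℝ E ℝ)) z :=
      (hVd z.1).hasFDerivAt.comp z hasFDerivAt_fst
    have h2 := h1.add (((he z).pow 2).const_mul p)
    have h3 : fderiv ℝ (fun z : E × ℝ => V z.1 + p * (z.2 - α z.1) ^ 2) z = _ := h2.fderiv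
    rw [h3]
    simp
    ring
  refine ⟨hfirst, fun hα0 v w => ?_⟩
  have hW : ContDiff ℝ (⊤ : ℕ∞) (fun z : E × ℝ => V z.1 + p * (z.2 - α z.1) ^ 2) :=
    (hV.comp contDiff_fst).add (contDiff_const.mul
      ((contDiff_snd.sub (hα.comp contDiff_fst)).pow 2))
  set W := (fun z : E × ℝ => V z.1 + p * (z.2 - α z.1) ^ 2) with hWdef
  have hW1 : Differentiable ℝ (fderiv ℝ W) :=
    (hW.fderiv_right (m := 1) (by norm_cast)).differentiable (by simp)
  have hA : HasFDerivAt (fun z => fderiv ℝ W z w)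
      ((fderiv ℝ (fderiv ℝ W) 0).flip w) 0 := by
    have := (hW1 0).hasFDerivAt.clm_apply (hasFDerivAt_const w (0 : E × ℝ))
    simpa using this
  have hB1 : HasFDerivAt (fun z : E × ℝ => fderiv ℝ V z.1 w.1)
      (((fderiv ℝ (fderiv ℝ V) 0).flip w.1).comp (ContinuousLinearMap.fst ℝ E ℝ)) 0 := by
    have h0 : HasFDerivAt (fun y => fderiv ℝ V y w.1)
        ((fderiv ℝ (fderiv ℝ V) 0).flip w.1) (0 : E × ℝ).1 := by
      have := (hV1 0).hasFDerivAt.clm_apply (hasFDerivAt_const w.1 (0 : E))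
      simpa using this
    exact h0.comp (0 : E × ℝ) hasFDerivAt_fst
  have hB2 : DifferentiableAt ℝ (fun z : E × ℝ => w.2 - fderiv ℝ α z.1 w.1) 0 := by
    have : Differentiable ℝ (fun z : E × ℝ => fderiv ℝ α z.1) := hα1.comp differentiable_fst
    exact ((differentiable_const _).sub (this.clm_apply (differentiable_const _))) 0
  have hB := hB1.add (((he 0).const_mul (2 * p)).mul hB2.hasFDerivAt)
  have hAB : (fun z => fderiv ℝ W z w) = (fun z : E × ℝ => fderiv ℝ V z.1 w.1) +
      ((fun z : E × ℝ => 2 * p * (z.2 - α z.1)) * fun z => (w.2 - fderiv ℝ α z.1 w.1)) := by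
    funext z
    exact hfirst z w
  rw [hAB] at hA
  have := congrArg (fun T : E × ℝ →L[ℝ] ℝ => T v) (hA.unique hB)
  simp [hα0] at this
  rw [this]
  ring

/-- backstepping case. For the strict-feedback system
`y' = h₁ y + x • h₂ y`, `x' = f (y,x) + g (y,x) u` with `g` never vanishing, if the
`y`-subsystem satisfies the local-behavior assumption (Assumption 2), then for every row
vector `K` making `A + BK` Hurwitz there is a smooth feedback `α₀` with `α₀ 0 = 0` and
`Dα₀(0) = K` rendering the origin of the closed loop globally asymptotically stable. -/
theorem stmt4 {ny : ℕ}
    (h₁ : (Fin ny → ℝ) → (Fin ny → ℝ)) (h₂ : (Fin ny → ℝ) → (Fin ny → ℝ))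
    (f g : ((Fin ny → ℝ) × ℝ) → ℝ)
    (hh₁ : ContDiff ℝ (⊤ : ℕ∞) h₁) (hh₂ : ContDiff ℝ (⊤ : ℕ∞) h₂)
    (hf : ContDiff ℝ (⊤ : ℕ∞) f) (hg : ContDiff ℝ (⊤ : ℕ∞) g)
    (hh₁0 : h₁ 0 = 0) (hf0 : f 0 = 0) (hgne : ∀ z, g z ≠ 0)
    -- first-order approximation data
    (H₁ : Matrix (Fin ny) (Fin ny) ℝ) (F₁ : Fin ny → ℝ) (F₂ : ℝ)
    (hH₁ : ∀ v, fderiv ℝ h₁ 0 v = H₁.mulVec v)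
    (hF : ∀ v : (Fin ny → ℝ) × ℝ, fderiv ℝ f 0 v = F₁ ⬝ᵥ v.1 + F₂ * v.2)
    (A : Matrix (Fin ny ⊕ Fin 1) (Fin ny ⊕ Fin 1) ℝ)
    (B : Matrix (Fin ny ⊕ Fin 1) (Fin 1) ℝ)
    (hA : A = Matrix.fromBlocks H₁ (Matrix.of fun i _ => h₂ 0 i)
        (Matrix.of fun _ j => F₁ j) (Matrix.of fun _ _ => F₂))
    (hB : B = Matrix.of fun i (_ : Fin 1) => Sum.elim (fun _ => (0:ℝ)) (fun _ => g 0) i)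
    -- Assumption 2: prescribed local behavior is solvable for the `y`-subsystem
    (hass : ∀ (Ky : Fin ny → ℝ) (Py : Matrix (Fin ny) (Fin ny) ℝ), Py.PosDef →
      (-(Py * (H₁ + Matrix.vecMulVec (h₂ 0) Ky)
          + (H₁ + Matrix.vecMulVec (h₂ 0) Ky)ᵀ * Py)).PosDef →
      ∃ Vy : (Fin ny → ℝ) → ℝ, ContDiff ℝ (⊤ : ℕ∞) Vy ∧ (∀ y, 0 ≤ Vy y) ∧
        IsProper Vy ∧ IsPosDefFn Vy ∧ ((1:ℝ)/2) • hessianAt Vy 0 = Py ∧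
        ∀ y : Fin ny → ℝ, y ≠ 0 →
          fderiv ℝ Vy y (h₂ y) = 0 → fderiv ℝ Vy y (h₁ y) < 0)
    (K : Matrix (Fin 1) (Fin ny ⊕ Fin 1) ℝ)
    (hHurwitz : Hurwitz (A + B * K)) :
    ∃ α₀ : ((Fin ny → ℝ) × ℝ) → ℝ, ContDiff ℝ (⊤ : ℕ∞) α₀ ∧ α₀ 0 = 0 ∧
      (∀ v : (Fin ny → ℝ) × ℝ, fderiv ℝ α₀ 0 v
        = (∑ i, K 0 (Sum.inl i) * v.1 i) + K 0 (Sum.inr 0) * v.2) ∧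
      IsGAS (fun z : (Fin ny → ℝ) × ℝ =>
        (h₁ z.1 + z.2 • h₂ z.1, f z + g z * α₀ z)) := by
  obtain ⟨P, hP, hPM⟩ := aux_lyap _ hHurwitz
  obtain ⟨p, Ky, Py, hp, hPyT, hQ⟩ := aux_block P hP
  have hPT : Pᵀ = P := by
    have := hP.isHermitian
    rwa [Matrix.IsHermitian, Matrix.conjTranspose_eq_transpose_of_trivial] at this
  -- the linear closed loop in block form
  have hM : ∀ (y : Fin ny → ℝ) (x : ℝ), (A + B * K) *ᵥ (Sum.elim y (fun _ => x)) =
      Sum.elim (H₁ *ᵥ y + x • h₂ 0) (fun _ => F₁ ⬝ᵥ y + F₂ * x +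
        ((∑ i, K 0 (Sum.inl i) * y i) + K 0 (Sum.inr 0) * x) * g 0) := by
    intro y x
    rw [hA, hB]
    ext (i | i)
    · simp [Matrix.mulVec, dotProduct, Matrix.mul_apply, mul_comm]
    · simp only [Matrix.mulVec, dotProduct, Matrix.mul_apply, Matrix.add_apply,
        Fintype.sum_sum_type, Sum.elim_inl, Sum.elim_inr, Matrix.of_apply,
        Matrix.fromBlocks_apply₂₁, Matrix.fromBlocks_apply₂₂, Finset.univ_unique,
        Finset.sum_singleton, add_mul, Finset.sum_add_distrib, Finset.sum_mul]
      have : ∀ j, g 0 * K default (Sum.inl j) * y j = K 0 (Sum.inl j) * y j * g 0 := by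
        intro j
        rw [show (default : Fin 1) = 0 from rfl]
        ring
      simp only [this, show (default : Fin 1) = 0 from rfl]
      ring
  have hne : ∀ (y : Fin ny → ℝ) (x : ℝ), (y ≠ 0 ∨ x ≠ 0) →
      (Sum.elim y (fun _ => x) : Fin ny ⊕ Fin 1 → ℝ) ≠ 0 := by
    intro y x h h0
    rcases h with h | h
    · apply h
      funext i
      exact congrFun h0 (Sum.inl i)
    · exact h (congrFun h0 (Sum.inr 0))
  have hneg : ∀ (y : Fin ny → ℝ) (x : ℝ), (y ≠ 0 ∨ x ≠ 0) →
      y ⬝ᵥ Py *ᵥ (H₁ *ᵥ y + x • h₂ 0) + p * (x - Ky ⬝ᵥ y) * ((F₁ ⬝ᵥ y + F₂ * x +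
        ((∑ i, K 0 (Sum.inl i) * y i) + K 0 (Sum.inr 0) * x) * g 0)
          - Ky ⬝ᵥ (H₁ *ᵥ y + x • h₂ 0)) < 0 := by
    intro y x h
    rw [← hQ, ← hM]
    have h1 := hPM.dotProduct_mulVec_pos (hne y x h)
    rw [star_trivial, aux_sym _ _ hPT] at h1
    linarith
  have hNy : ∀ y : Fin ny → ℝ, (H₁ + Matrix.vecMulVec (h₂ 0) Ky) *ᵥ y =
      H₁ *ᵥ y + (Ky ⬝ᵥ y) • h₂ 0 := by
    intro y
    rw [Matrix.add_mulVec, Matrix.vecMulVec_mulVec, op_smul_eq_smul]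
  have hnegy : ∀ y : Fin ny → ℝ, y ≠ 0 →
      y ⬝ᵥ Py *ᵥ (H₁ *ᵥ y + (Ky ⬝ᵥ y) • h₂ 0) < 0 := by
    intro y hy
    have := hneg y (Ky ⬝ᵥ y) (Or.inl hy)
    simpa only [sub_self, mul_zero, zero_mul, add_zero] using this
  have hPy : Py.PosDef := by
    apply Matrix.PosDef.of_dotProduct_mulVec_pos
    · rw [Matrix.IsHermitian, Matrix.conjTranspose_eq_transpose_of_trivial, hPyT]
    · intro y hy
      have h1 := hP.dotProduct_mulVec_pos (hne y (Ky ⬝ᵥ y) (Or.inl hy))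
      rw [star_trivial, hQ] at h1
      simpa only [star_trivial, sub_self, mul_zero, zero_mul, add_zero] using h1
  have hPyN : (-(Py * (H₁ + Matrix.vecMulVec (h₂ 0) Ky)
          + (H₁ + Matrix.vecMulVec (h₂ 0) Ky)ᵀ * Py)).PosDef := by
    apply Matrix.PosDef.of_dotProduct_mulVec_pos
    · rw [Matrix.IsHermitian, Matrix.conjTranspose_eq_transpose_of_trivial]
      rw [Matrix.transpose_neg, Matrix.transpose_add, Matrix.transpose_mul, Matrix.transpose_mul,
        Matrix.transpose_transpose, hPyT, add_comm]
    · intro y hy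
      rw [star_trivial, aux_sym _ _ hPyT, hNy]
      linarith [hnegy y hy]
  obtain ⟨Vy, hVy, hVynn, hVyp, hVypd, hVyH, hVyclf⟩ := hass Ky Py hPy hPyN
  have hVy2 := aux_hess Vy Py hVyH
  -- first stage: virtual control
  let KyL : (Fin ny → ℝ) →L[ℝ] ℝ := ∑ i, Ky i • ContinuousLinearMap.proj i
  have hKyL : ∀ v, KyL v = Ky ⬝ᵥ v := by
    intro v
    simp [KyL, dotProduct]
  obtain ⟨αy, hαy, hαyev, hαydec⟩ := aux_clf h₁ h₂ hh₁ hh₂ hh₁0 Vy hVy hVypd KyL (by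
    intro v hv
    rw [hVy2, hH₁, hKyL]
    linarith [hnegy v hv]) hVyclf
  have hαy0 : αy 0 = 0 := by
    rw [hαyev.self_of_nhds, map_zero]
  have hαyd : ∀ v, fderiv ℝ αy 0 v = Ky ⬝ᵥ v := by
    intro v
    rw [Filter.EventuallyEq.fderiv_eq (show αy =ᶠ[𝓝 0] KyL from hαyev), KyL.fderiv, hKyL]
  -- second stage
  obtain ⟨hW1, hW2⟩ := aux_backstep Vy αy hVy hαy p
  have hW2 := hW2 hαy0
  have hWs : ContDiff ℝ (⊤ : ℕ∞)
      (fun z : (Fin ny → ℝ) × ℝ => Vy z.1 + p * (z.2 - αy z.1) ^ 2) :=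
    (hVy.comp contDiff_fst).add (contDiff_const.mul
      ((contDiff_snd.sub (hαy.comp contDiff_fst)).pow 2))
  have hWp := aux_proper Vy hVy.continuous hVyp αy hαy.continuous hVynn p hp
  have hWpd : IsPosDefFn (fun z : (Fin ny → ℝ) × ℝ => Vy z.1 + p * (z.2 - αy z.1) ^ 2) := by
    refine ⟨by simp [hVypd.1, hαy0], fun z hz => ?_⟩
    by_cases hy : z.1 = 0
    · have hx : z.2 ≠ 0 := fun h => hz (Prod.ext hy h)
      simp only [hy, hVypd.1, hαy0]
      positivity
    · have := hVypd.2 _ hy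
      positivity
  generalize (fun z : (Fin ny → ℝ) × ℝ => Vy z.1 + p * (z.2 - αy z.1) ^ 2) = W at *
  let F : (Fin ny → ℝ) × ℝ → (Fin ny → ℝ) × ℝ := fun z => (h₁ z.1 + z.2 • h₂ z.1, f z)
  let G : (Fin ny → ℝ) × ℝ → (Fin ny → ℝ) × ℝ := fun z => (0, g z)
  have hFs : ContDiff ℝ (⊤ : ℕ∞) F :=
    ((hh₁.comp contDiff_fst).add (contDiff_snd.smul (hh₂.comp contDiff_fst))).prodMk hf
  have hGs : ContDiff ℝ (⊤ : ℕ∞) G := contDiff_const.prodMk hg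
  have hF0 : F 0 = 0 := by
    simp [F, hh₁0, hf0]
  have hFd : ∀ v, fderiv ℝ F 0 v = (H₁ *ᵥ v.1 + v.2 • h₂ 0, F₁ ⬝ᵥ v.1 + F₂ * v.2) := by
    intro v
    have d1 : HasFDerivAt h₁ (fderiv ℝ h₁ 0) (0 : (Fin ny → ℝ) × ℝ).1 :=
      ((hh₁.differentiable (by simp)) 0).hasFDerivAt
    have d2 : HasFDerivAt h₂ (fderiv ℝ h₂ 0) (0 : (Fin ny → ℝ) × ℝ).1 :=
      ((hh₂.differentiable (by simp)) 0).hasFDerivAt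
    have d3 : HasFDerivAt f (fderiv ℝ f 0) 0 := ((hf.differentiable (by simp)) 0).hasFDerivAt
    have d : HasFDerivAt F _ 0 :=
      ((d1.comp (0 : (Fin ny → ℝ) × ℝ) hasFDerivAt_fst).add
        (hasFDerivAt_snd.smul (d2.comp (0 : (Fin ny → ℝ) × ℝ) hasFDerivAt_fst))).prodMk d3
    rw [d.fderiv]
    simp [hH₁, hF]
  let KL : (Fin ny → ℝ) × ℝ →L[ℝ] ℝ :=
    (∑ i, K 0 (Sum.inl i) • ContinuousLinearMap.proj i).comp
        (ContinuousLinearMap.fst ℝ (Fin ny → ℝ) ℝ)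
      + K 0 (Sum.inr 0) • ContinuousLinearMap.snd ℝ (Fin ny → ℝ) ℝ
  have hKL : ∀ v, KL v = (∑ i, K 0 (Sum.inl i) * v.1 i) + K 0 (Sum.inr 0) * v.2 := by
    intro v
    simp [KL]
  obtain ⟨α, hα, hαev, hαdec⟩ := aux_clf F G hFs hGs hF0 W hWs hWpd KL (by
    intro v hv
    have hv' : v.1 ≠ 0 ∨ v.2 ≠ 0 := by
      by_contra! h
      exact hv (Prod.ext h.1 h.2)
    have h1 := hneg v.1 v.2 hv'
    rw [hW2, hVy2, hFd, hαyd, hαyd, hKL]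
    simp only [G, Prod.smul_mk, Prod.mk_add_mk, smul_zero, add_zero, smul_eq_mul]
    linarith) (by
    intro z hz hGz
    rw [hW1] at hGz ⊢
    simp only [G, map_zero, sub_zero, zero_add] at hGz
    have he : z.2 - αy z.1 = 0 := by
      rcases mul_eq_zero.1 hGz with h | h
      · rcases mul_eq_zero.1 h with h | h
        · linarith
        · exact h
      · exact absurd h (hgne z)
    have hx : z.2 = αy z.1 := by linarith
    have hy : z.1 ≠ 0 := by
      intro h
      apply hz
      refine Prod.ext h ?_
      rw [hx, h, hαy0]
      rfl
    rw [he, mul_zero, zero_mul, add_zero]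
    have := hαydec z.1 hy
    simpa only [F, hx] using this)
  refine ⟨α, hα, ?_, ?_, ?_⟩
  · rw [hαev.self_of_nhds, map_zero]
  · intro v
    rw [Filter.EventuallyEq.fderiv_eq (show α =ᶠ[𝓝 0] KL from hαev), KL.fderiv, hKL]
  · have hcl : (fun z : (Fin ny → ℝ) × ℝ => (h₁ z.1 + z.2 • h₂ z.1, f z + g z * α z)) =
        fun z => F z + α z • G z := by
      funext z
      simp [F, G, mul_comm]
    rw [hcl]
    have h1 : (1 : WithTop ℕ∞) ≤ ((⊤ : ℕ∞) : WithTop ℕ∞) := by norm_cast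
    refine aux_gas _ ((hFs.add (hα.smul hGs)).of_le h1) ?_ W (hWs.of_le h1) hWp hWpd hαdec
    rw [hF0, hαev.self_of_nhds, map_zero, zero_smul, add_zero]
end
end

section
/- Let a: ℝ^n → ℝ^n and b: ℝ^n → ℝ^{n×p} be locally Lipschitz with a(0) = 0, let V: ℝ^n → ℝ≥0 be a C¹ proper positive definite function, let K ∈ ℝ^{p×n}, let α∞: ℝ^n → ℝ^p be locally Lipschitz, and let r₀ > 0. Assume (i) ∇V(χ)·(a(χ) + b(χ)α∞(χ)) < 0 for all χ ≠ 0, and (ii) ∇V(χ)·(a(χ) + b(χ)Kχ) < 0 for all χ with 0 < V(χ) ≤ r₀. Let ρ: ℝ≥0 → [0,1] be any locally Lipschitz function with ρ(s) = 0 for s ≤ r₀/2 and ρ(s) = 1 for s ≥ r₀. Then the map α₀(χ) := ρ(V(χ))α∞(χ) + (1 − ρ(V(χ)))Kχ is locally Lipschitz, coincides with χ ↦ Kχ on a neighborhood of 0 (hence is differentiable at 0 with α₀(0) = 0 and Dα₀(0) = K), and satisfies ∇V(χ)·(a(χ) + b(χ)α₀(χ)) < 0 for all χ ≠ 0. -/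
open Matrix Filter Topology Asymptotics

noncomputable section

theorem locLip_blend {X E : Type*} [PseudoEMetricSpace X] [NormedAddCommGroup E]
    [NormedSpace ℝ E] {r : X → ℝ} {f g : X → E} (hr : LocallyLipschitz r)
    (hf : LocallyLipschitz f) (hg : LocallyLipschitz g) :
    LocallyLipschitz (fun x => r x • f x + (1 - r x) • g x) := by
  have hF : LocallyLipschitz (fun q : ℝ × E × E =>
      q.1 • q.2.1 + (1 - q.1) • q.2.2) := by
    apply ContDiff.locallyLipschitz (𝕂 := ℝ)
    fun_prop
  have hP : LocallyLipschitz (fun x => (r x, f x, g x)) := hr.prodMk (hf.prodMk hg)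
  exact LocallyLipschitz.comp hF hP

/-- Blending a global feedback `αoo` with the local linear feedback
`Kχ` through a locally Lipschitz saturation `ρ : ℝ≥0 → [0,1]` of the Lyapunov level
yields a locally Lipschitz feedback that equals `Kχ` near the origin (in particular it
is differentiable at `0` with value `0` and derivative `K`) and makes `V` strictly
decrease everywhere away from the origin. -/
theorem stmt8 {n p : ℕ}
    (a : (Fin n → ℝ) → (Fin n → ℝ)) (b : (Fin n → ℝ) → Fin n → Fin p → ℝ)
    (ha_lip : LocallyLipschitz a) (hb_lip : LocallyLipschitz b) (ha0 : a 0 = 0)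
    (V : (Fin n → ℝ) → ℝ)
    (hV : ContDiff ℝ 1 V) (hVnonneg : ∀ χ, 0 ≤ V χ)
    (hVproper : IsProper V) (hVpos : IsPosDefFn V)
    (K : Matrix (Fin p) (Fin n) ℝ)
    (αoo : (Fin n → ℝ) → (Fin p → ℝ)) (hαoo : LocallyLipschitz αoo)
    (r₀ : ℝ) (hr₀ : 0 < r₀)
    (hglob : ∀ χ : Fin n → ℝ, χ ≠ 0 →
      fderiv ℝ V χ (a χ + (Matrix.of (b χ)).mulVec (αoo χ)) < 0)
    (hloc : ∀ χ : Fin n → ℝ, 0 < V χ → V χ ≤ r₀ →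
      fderiv ℝ V χ (a χ + (Matrix.of (b χ)).mulVec (K.mulVec χ)) < 0)
    (ρ : NNReal → ℝ) (hρ_lip : LocallyLipschitz ρ)
    (hρ_range : ∀ s, ρ s ∈ Set.Icc (0:ℝ) 1)
    (hρ0 : ∀ s : NNReal, (s:ℝ) ≤ r₀ / 2 → ρ s = 0)
    (hρ1 : ∀ s : NNReal, r₀ ≤ (s:ℝ) → ρ s = 1)
    (α₀ : (Fin n → ℝ) → (Fin p → ℝ))
    (hα₀def : α₀ = fun χ =>
      ρ (V χ).toNNReal • αoo χ + (1 - ρ (V χ).toNNReal) • K.mulVec χ) :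
    LocallyLipschitz α₀ ∧
    (∀ᶠ χ in nhds (0 : Fin n → ℝ), α₀ χ = K.mulVec χ) ∧
    α₀ 0 = 0 ∧ DifferentiableAt ℝ α₀ 0 ∧ (∀ v, fderiv ℝ α₀ 0 v = K.mulVec v) ∧
    (∀ χ : Fin n → ℝ, χ ≠ 0 →
      fderiv ℝ V χ (a χ + (Matrix.of (b χ)).mulVec (α₀ χ)) < 0) := by
  have hV0 := hVpos.1
  have hVc : Continuous V := hV.continuous
  have hev : ∀ᶠ χ in nhds (0 : Fin n → ℝ), α₀ χ = K.mulVec χ := by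
    have h1 : ∀ᶠ χ in nhds (0 : Fin n → ℝ), V χ < r₀ / 2 := by
      apply hVc.continuousAt.eventually_lt_const
      rw [hV0]; positivity
    filter_upwards [h1] with χ hχ
    have h2 : ρ (V χ).toNNReal = 0 := by
      apply hρ0
      rw [Real.coe_toNNReal _ (hVnonneg χ)]
      exact hχ.le
    simp [hα₀def, h2]
  have hd : HasFDerivAt α₀ (LinearMap.toContinuousLinearMap K.mulVecLin) 0 := by
    have := (LinearMap.toContinuousLinearMap K.mulVecLin).hasFDerivAt (x := (0 : Fin n → ℝ))
    refine this.congr_of_eventuallyEq ?_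
    filter_upwards [hev] with χ hχ
    simpa using hχ
  refine ⟨?_, hev, ?_, hd.differentiableAt, ?_, ?_⟩
  · have hT : LipschitzWith 1 Real.toNNReal := by
      apply LipschitzWith.of_dist_le_mul
      intro x y
      rw [NNReal.dist_eq, Real.dist_eq, Real.coe_toNNReal', Real.coe_toNNReal']
      simpa using abs_max_sub_max_le_abs x y 0
    have hρV : LocallyLipschitz (fun χ => ρ (V χ).toNNReal) :=
      hρ_lip.comp (hT.locallyLipschitz.comp hV.locallyLipschitz)
    have hK : LocallyLipschitz (fun χ : Fin n → ℝ => K.mulVec χ) :=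
      (LinearMap.toContinuousLinearMap K.mulVecLin).lipschitz.locallyLipschitz
    rw [hα₀def]
    exact locLip_blend hρV hαoo hK
  · simpa using hev.self_of_nhds
  · intro v
    rw [hd.fderiv]; simp
  · intro χ hχ
    have hpos := hVpos.2 χ hχ
    have hg := hglob χ hχ
    obtain ⟨h0, h1⟩ := hρ_range (V χ).toNNReal
    have key : fderiv ℝ V χ (a χ + (Matrix.of (b χ)).mulVec (α₀ χ)) =
        ρ (V χ).toNNReal * fderiv ℝ V χ (a χ + (Matrix.of (b χ)).mulVec (αoo χ)) +
        (1 - ρ (V χ).toNNReal) *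
          fderiv ℝ V χ (a χ + (Matrix.of (b χ)).mulVec (K.mulVec χ)) := by
      rw [hα₀def]
      simp only [Matrix.mulVec_add, Matrix.mulVec_smul, map_add, map_smul, smul_eq_mul]
      ring
    rw [key]
    rcases le_total (V χ) r₀ with h | h
    · have hl := hloc χ hpos h
      rcases h0.eq_or_lt with h2 | h2
      · rw [← h2]; linarith
      · exact add_neg_of_neg_of_nonpos (mul_neg_of_pos_of_neg h2 hg)
          (mul_nonpos_of_nonneg_of_nonpos (sub_nonneg.2 h1) hl.le)
    · have h2 : ρ (V χ).toNNReal = 1 := by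
        apply hρ1
        rw [Real.coe_toNNReal _ (hVnonneg χ)]
        exact h
      rw [h2]; linarith
end
end

section
/- Let C ⊂ ℝ^n be a compact set with 0 ∉ C, let V: ℝ^n → ℝ be C¹, let a: ℝ^n → ℝ^n and b: ℝ^n → ℝ^{n×p} be continuous, and let R ∈ ℝ^{p×p} be symmetric positive definite. If for every χ ∈ C, ∇V(χ)ᵀb(χ) = 0 implies ∇V(χ)·a(χ) < 0, then there exists ℓ ≥ 0 such that for all χ ∈ C, ∇V(χ)·a(χ) − (ℓ/4)·(∇V(χ)ᵀb(χ)) R⁻¹ (∇V(χ)ᵀb(χ))ᵀ < 0. -/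
open Matrix Filter Topology Asymptotics

noncomputable section

theorem aux_gain {X : Type*} [TopologicalSpace X] (C : Set X) (hC : IsCompact C)
    (f g : X → ℝ) (hf : Continuous f) (hg : Continuous g) (h0 : ∀ x, 0 ≤ g x)
    (h : ∀ x ∈ C, g x = 0 → f x < 0) :
    ∃ l : ℝ, 0 ≤ l ∧ ∀ x ∈ C, f x - l / 4 * g x < 0 := by
  obtain ⟨k, hk⟩ := hC.elim_directed_cover (fun k : ℕ => {x | f x - (k : ℝ) / 4 * g x < 0})
    (fun k => isOpen_lt (by fun_prop) continuous_const)
    (by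
      intro x hx
      rw [Set.mem_iUnion]
      rcases (h0 x).eq_or_lt with h1 | h1
      · exact ⟨0, by simpa using h x hx h1.symm⟩
      · obtain ⟨k, hk⟩ := exists_nat_gt (4 * f x / g x)
        refine ⟨k, ?_⟩
        rw [div_lt_iff₀ h1] at hk
        simp only [Set.mem_setOf_eq]
        linarith)
    (directed_of_isDirected_le (by
      intro i j hij x hx
      simp only [Set.mem_setOf_eq] at hx ⊢
      have h1 : (i : ℝ) ≤ j := by exact_mod_cast hij
      have := mul_le_mul_of_nonneg_right h1 (h0 x)
      linarith))
  exact ⟨k, Nat.cast_nonneg k, fun x hx => hk hx⟩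

/-- On a compact set `C` not containing the origin, if the Artstein
condition holds at every point of `C`, then some gain `ℓ ≥ 0` makes the damped
derivative `L_aV − (ℓ/4) L_bV R⁻¹ (L_bV)ᵀ` negative on all of `C`. -/
theorem stmt9 {n p : ℕ}
    (C : Set (Fin n → ℝ)) (hC : IsCompact C) (h0C : (0 : Fin n → ℝ) ∉ C)
    (V : (Fin n → ℝ) → ℝ) (hV : ContDiff ℝ 1 V)
    (a : (Fin n → ℝ) → (Fin n → ℝ)) (b : (Fin n → ℝ) → Fin n → Fin p → ℝ)
    (ha : Continuous a) (hb : Continuous b)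
    (R : Matrix (Fin p) (Fin p) ℝ) (hR : R.PosDef)
    (hArtstein : ∀ χ ∈ C,
      (∀ i, fderiv ℝ V χ (fun k => b χ k i) = 0) → fderiv ℝ V χ (a χ) < 0) :
    ∃ ℓ : ℝ, 0 ≤ ℓ ∧ ∀ χ ∈ C,
      fderiv ℝ V χ (a χ)
        - ℓ / 4 * ((fun i => fderiv ℝ V χ (fun k => b χ k i)) ⬝ᵥ
            R⁻¹.mulVec (fun i => fderiv ℝ V χ (fun k => b χ k i))) < 0 := by
  have hd : Continuous (fderiv ℝ V) := hV.continuous_fderiv (by norm_num)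
  have hw : ∀ i, Continuous fun χ => fderiv ℝ V χ (fun k => b χ k i) := fun i =>
    hd.clm_apply (by fun_prop)
  have hRi : R⁻¹.PosDef := hR.inv
  refine aux_gain C hC (fun χ => fderiv ℝ V χ (a χ)) (fun χ =>
    (fun i => fderiv ℝ V χ (fun k => b χ k i)) ⬝ᵥ
            R⁻¹.mulVec (fun i => fderiv ℝ V χ (fun k => b χ k i)))
    (hd.clm_apply ha) ?_ ?_ ?_
  · have hw' : Continuous fun χ => (fun i => fderiv ℝ V χ (fun k => b χ k i)) :=
      continuous_pi hw
    exact hw'.dotProduct (continuous_const.matrix_mulVec hw')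
  · intro χ
    simpa using hRi.posSemidef.dotProduct_mulVec_nonneg
      (fun i => fderiv ℝ V χ (fun k => b χ k i))
  · intro χ hχ h
    apply hArtstein χ hχ
    by_contra hne
    have h2 : (fun i => fderiv ℝ V χ (fun k => b χ k i)) ≠ 0 :=
      fun h3 => hne fun i => congrFun h3 i
    have h4 := hRi.dotProduct_mulVec_pos h2
    simp only [star_trivial] at h4
    exact absurd h h4.ne'
end
end

section
/- Let V: ℝ^n → ℝ≥0 be a C² proper positive definite function with ∇V(0) = 0 and P := (1/2)·H(V)(0), let a: ℝ^n → ℝ^n be C¹ with a(0) = 0 and A := Da(0), let b: ℝ^n → ℝ^{n×p} be continuous with B := b(0), and let R ∈ ℝ^{p×p} be symmetric positive definite. If AᵀP + PA − PBR⁻¹BᵀP = −Q for some positive definite matrix Q, then there exists r₀ > 0 such that for all χ with 0 < V(χ) ≤ r₀, −∇V(χ)·a(χ) + (1/4)·(∇V(χ)ᵀb(χ)) R⁻¹ (∇V(χ)ᵀb(χ))ᵀ > 0. -/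
open Matrix Filter Topology Asymptotics

noncomputable section

theorem aux_mul {E : Type*} {l : Filter E} {f f0 g g0 u v : E → ℝ}
    (hf : (fun x => f x - f0 x) =o[l] u) (hf0 : f0 =O[l] u)
    (hg : (fun x => g x - g0 x) =o[l] v) (hg0 : g0 =O[l] v) :
    (fun x => f x * g x - f0 x * g0 x) =o[l] (fun x => u x * v x) := by
  have hgO : g =O[l] v := by
    have := hg.isBigO.add hg0
    simpa using this
  have h := (hf.mul_isBigO hgO).add (hf0.mul_isLittleO hg)
  refine h.congr_left fun x => ?_
  ring

theorem aux_dot {E : Type*} {l : Filter E} {m : ℕ} {f f0 g g0 : E → Fin m → ℝ} {u v : E → ℝ}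
    (hf : ∀ i, (fun x => f x i - f0 x i) =o[l] u) (hf0 : ∀ i, (fun x => f0 x i) =O[l] u)
    (hg : ∀ i, (fun x => g x i - g0 x i) =o[l] v) (hg0 : ∀ i, (fun x => g0 x i) =O[l] v) :
    (fun x => f x ⬝ᵥ g x - f0 x ⬝ᵥ g0 x) =o[l] (fun x => u x * v x) := by
  have h := IsLittleO.sum (s := Finset.univ) (fun i _ => aux_mul (hf i) (hf0 i) (hg i) (hg0 i))
  refine h.congr_left fun x => ?_
  simp [dotProduct, Finset.sum_sub_distrib]

theorem aux_mulVec_bigO {m k : ℕ} (M : Matrix (Fin m) (Fin k) ℝ) {E : Type*} {l : Filter E}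
    {f : E → Fin k → ℝ} {v : E → ℝ} (hf : ∀ i, (fun x => f x i) =O[l] v) (i : Fin m) :
    (fun x => (M *ᵥ f x) i) =O[l] v := by
  simp only [mulVec, dotProduct]
  have h := IsBigO.sum (s := Finset.univ) (fun j _ => (hf j).const_mul_left (M i j))
  refine h.congr_left fun x => ?_
  simp

theorem aux_Q {n : ℕ} (Q : Matrix (Fin n) (Fin n) ℝ) (hQ : Q.PosDef) :
    ∃ c > (0:ℝ), ∀ x : Fin n → ℝ, c * (‖x‖ * ‖x‖) ≤ x ⬝ᵥ Q *ᵥ x := by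
  have hc : Continuous (fun x : Fin n → ℝ => x ⬝ᵥ Q *ᵥ x) := by fun_prop
  obtain ⟨c, hc0, h⟩ := (isCompact_sphere (0 : Fin n → ℝ) 1).exists_forall_le'
    hc.continuousOn (a := 0) (fun x hx => by
      have hx0 : x ≠ 0 := by
        rintro rfl
        simp at hx
      simpa using hQ.dotProduct_mulVec_pos hx0)
  refine ⟨c, hc0, fun x => ?_⟩
  by_cases hx : x = 0
  · simp [hx]
  have hn : 0 < ‖x‖ := norm_pos_iff.mpr hx
  have h1 := h (‖x‖⁻¹ • x) (by simp [norm_smul, hn.ne'])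
  simp only [mulVec_smul, dotProduct_smul, smul_dotProduct, smul_eq_mul] at h1
  calc c * (‖x‖ * ‖x‖) ≤ (‖x‖⁻¹ * (‖x‖⁻¹ * (x ⬝ᵥ Q *ᵥ x))) * (‖x‖ * ‖x‖) := by gcongr
    _ = _ := by field_simp

theorem aux_sub {n : ℕ} (V : (Fin n → ℝ) → ℝ) (hV : Continuous V)
    (hp : IsProper V) (hpos : IsPosDefFn V) (δ : ℝ) (hδ : 0 < δ) :
    ∃ r > (0:ℝ), ∀ χ, V χ ≤ r → ‖χ‖ < δ := by
  have h1 := hp.eventually (eventually_gt_atTop 1)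
  obtain ⟨K, hK⟩ : ∃ K : ℝ, ∀ χ, K < ‖χ‖ → 1 < V χ := by
    rw [← comap_norm_atTop (E := Fin n → ℝ), eventually_comap] at h1
    obtain ⟨K, hK⟩ := eventually_atTop.1 h1
    exact ⟨K, fun χ h => hK _ h.le χ rfl⟩
  have hcomp : IsCompact (Metric.closedBall (0 : Fin n → ℝ) K \ Metric.ball 0 δ) :=
    (isCompact_closedBall _ _).diff Metric.isOpen_ball
  obtain ⟨m, hm0, hm⟩ := hcomp.exists_forall_le' hV.continuousOn (a := 0) (fun x hx => by
    apply hpos.2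
    rintro rfl
    exact hx.2 (by simpa using hδ))
  refine ⟨min 1 (m/2), by positivity, fun χ h => ?_⟩
  by_contra! hc
  have hK' : ‖χ‖ ≤ K := by
    by_contra! h2
    have := hK χ h2
    have := min_le_left 1 (m/2)
    linarith
  have := hm χ ⟨by simpa using hK', by simpa using hc⟩
  have := min_le_right 1 (m/2)
  linarith

theorem aux_alg {n p : ℕ} (P A Q : Matrix (Fin n) (Fin n) ℝ) (B : Matrix (Fin n) (Fin p) ℝ)
    (S : Matrix (Fin p) (Fin p) ℝ) (hP : Pᵀ = P)
    (h : Aᵀ * (((1:ℝ)/2) • P) + (((1:ℝ)/2) • P) * A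
        - (((1:ℝ)/2) • P) * B * S * Bᵀ * (((1:ℝ)/2) • P) = -Q) (x : Fin n → ℝ) :
    -((P *ᵥ x) ⬝ᵥ (A *ᵥ x)) + (1/4) * ((Bᵀ *ᵥ (P *ᵥ x)) ⬝ᵥ (S *ᵥ (Bᵀ *ᵥ (P *ᵥ x))))
      = x ⬝ᵥ Q *ᵥ x := by
  have hQ : Q = -(Aᵀ * (((1:ℝ)/2) • P) + (((1:ℝ)/2) • P) * A
        - (((1:ℝ)/2) • P) * B * S * Bᵀ * (((1:ℝ)/2) • P)) := by rw [h, neg_neg]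
  have e1 : (P *ᵥ x) ⬝ᵥ (A *ᵥ x) = x ⬝ᵥ (P * A) *ᵥ x := by
    rw [← mulVec_mulVec, dotProduct_mulVec x P, ← mulVec_transpose, hP]
  have e2 : x ⬝ᵥ (Aᵀ * P) *ᵥ x = x ⬝ᵥ (P * A) *ᵥ x := by
    rw [← e1, ← mulVec_mulVec, dotProduct_mulVec x Aᵀ, ← mulVec_transpose, transpose_transpose,
      dotProduct_comm]
  have e3 : (Bᵀ *ᵥ (P *ᵥ x)) ⬝ᵥ (S *ᵥ (Bᵀ *ᵥ (P *ᵥ x))) = x ⬝ᵥ (P * B * S * Bᵀ * P) *ᵥ x := by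
    simp only [← mulVec_mulVec]
    rw [dotProduct_mulVec x P, ← mulVec_transpose, hP, dotProduct_mulVec _ B, ← mulVec_transpose]
  rw [hQ, e1, e3]
  simp only [neg_mulVec, sub_mulVec, add_mulVec, dotProduct_neg, dotProduct_sub, dotProduct_add,
    Matrix.mul_smul, Matrix.smul_mul, smul_mulVec, dotProduct_smul, smul_eq_mul, e2]
  ring

theorem aux_lin {n : ℕ} (L : (Fin n → ℝ) →ₗ[ℝ] ℝ) (v : Fin n → ℝ) :
    L v = (fun k => L (Pi.single k 1)) ⬝ᵥ v := by
  rw [LinearMap.pi_apply_eq_sum_univ L v]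
  simp only [dotProduct, smul_eq_mul]
  refine Finset.sum_congr rfl fun i _ => ?_
  rw [mul_comm]
  congr 2
  ext j
  simp [Pi.single_apply, eq_comm]

/-- If `P := ½ H(V)(0)` solves `AᵀP + PA − PBR⁻¹BᵀP = −Q` with `Q`
positive definite, then on a small sublevel set `{0 < V ≤ r₀}` we have
`−L_aV + ¼ L_bV R⁻¹ (L_bV)ᵀ > 0`. -/
theorem stmt10 {n p : ℕ}
    (V : (Fin n → ℝ) → ℝ)
    (hV : ContDiff ℝ 2 V) (hVnonneg : ∀ χ, 0 ≤ V χ)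
    (hVproper : IsProper V) (hVpos : IsPosDefFn V)
    (hgrad0 : fderiv ℝ V 0 = 0)
    (a : (Fin n → ℝ) → (Fin n → ℝ)) (b : (Fin n → ℝ) → Fin n → Fin p → ℝ)
    (A : Matrix (Fin n) (Fin n) ℝ) (B : Matrix (Fin n) (Fin p) ℝ)
    (R : Matrix (Fin p) (Fin p) ℝ)
    (ha : ContDiff ℝ 1 a) (ha0 : a 0 = 0)
    (hA : ∀ v, fderiv ℝ a 0 v = A.mulVec v)
    (hb : Continuous b) (hB : B = Matrix.of (b 0))
    (hR : R.PosDef)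
    (Q : Matrix (Fin n) (Fin n) ℝ) (hQ : Q.PosDef)
    (hRiccati : Aᵀ * (((1:ℝ)/2) • hessianAt V 0) + (((1:ℝ)/2) • hessianAt V 0) * A
        - (((1:ℝ)/2) • hessianAt V 0) * B * R⁻¹ * Bᵀ * (((1:ℝ)/2) • hessianAt V 0)
        = -Q) :
    ∃ r₀ > (0:ℝ), ∀ χ : Fin n → ℝ, 0 < V χ → V χ ≤ r₀ →
      0 < -(fderiv ℝ V χ (a χ))
        + (1/4) * ((fun i => fderiv ℝ V χ (fun k => b χ k i)) ⬝ᵥ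
            R⁻¹.mulVec (fun i => fderiv ℝ V χ (fun k => b χ k i))) := by
  classical
  obtain ⟨c, hc0, hc⟩ := aux_Q Q hQ
  have hV1 : ContDiff ℝ 1 (fderiv ℝ V) := hV.fderiv_right (by norm_num)
  have hH := (hV1.differentiable (by norm_num) 0).hasFDerivAt
  have haD := (ha.differentiable (by norm_num) 0).hasFDerivAt
  have hsymm : (hessianAt V 0)ᵀ = hessianAt V 0 := by
    have hs : IsSymmSndFDerivAt ℝ V 0 :=
      (hV.contDiffAt).isSymmSndFDerivAt (by simp)
    ext i j
    simp [hessianAt, iteratedFDeriv_two_apply, hs.eq (Pi.single j 1) (Pi.single i 1)]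
  set H := hessianAt V 0 with hHdef
  have hHe : ∀ x k, fderiv ℝ (fderiv ℝ V) 0 x (Pi.single k 1) = (H *ᵥ x) k := by
    intro x k
    have := aux_lin (((fderiv ℝ (fderiv ℝ V) 0).flip (Pi.single k 1)).toLinearMap) x
    simp only [ContinuousLinearMap.coe_coe, ContinuousLinearMap.flip_apply] at this
    rw [this, ← hsymm]
    simp [mulVec, hHdef, hessianAt, iteratedFDeriv_two_apply, transpose, dotProduct]
  -- coordinates
  let G : (Fin n → ℝ) → Fin n → ℝ := fun χ k => fderiv ℝ V χ (Pi.single k 1)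
  let N : (Fin n → ℝ) → ℝ := fun χ => ‖χ‖
  have hid : ∀ i : Fin n, (fun x : Fin n → ℝ => x i) =O[𝓝 0] N := fun i =>
    IsBigO.of_bound 1 (Eventually.of_forall fun x => by
      simpa [N] using norm_le_pi_norm x i)
  have hG : ∀ k, (fun x => G x k - (H *ᵥ x) k) =o[𝓝 0] N := by
    intro k
    have h1 := (hH.clm_apply (hasFDerivAt_const (Pi.single k (1:ℝ)) (0 : Fin n → ℝ))).isLittleO
    refine (h1.congr_left fun x => ?_).trans_isBigO (IsBigO.of_bound 1 (Eventually.of_forall fun x => by simp [N]))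
    simp [G, hgrad0, hHe]
  have hG0 : ∀ k, (fun x => (H *ᵥ x) k) =O[𝓝 0] N := aux_mulVec_bigO H hid
  have hA' : ∀ k, (fun x => a x k - (A *ᵥ x) k) =o[𝓝 0] N := by
    intro k
    have h1 := (isLittleO_pi.1 haD.isLittleO) k
    refine (h1.congr_left fun x => ?_).trans_isBigO (IsBigO.of_bound 1 (Eventually.of_forall fun x => by simp [N]))
    simp [ha0, hA]
  have hA0 : ∀ k, (fun x => (A *ᵥ x) k) =O[𝓝 0] N := aux_mulVec_bigO A hid
  have t1 := aux_dot hG hG0 hA' hA0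
  let W : (Fin n → ℝ) → Fin p → ℝ := fun χ i => fderiv ℝ V χ (fun k => b χ k i)
  let W0 : (Fin n → ℝ) → Fin p → ℝ := fun χ => Bᵀ *ᵥ (H *ᵥ χ)
  have hW0 : ∀ i, (fun x => W0 x i) =O[𝓝 0] N := aux_mulVec_bigO Bᵀ hG0
  have hGV : ∀ χ v, fderiv ℝ V χ v = G χ ⬝ᵥ v := fun χ v =>
    aux_lin (fderiv ℝ V χ).toLinearMap v
  have hW : ∀ i, (fun x => W x i - W0 x i) =o[𝓝 0] N := by
    intro i
    have h1 := aux_dot (f := fun x k => b x k i) (f0 := fun x k => b 0 k i)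
      (u := fun _ => (1:ℝ)) (l := 𝓝 0) (fun k => by
        rw [isLittleO_one_iff]
        have : Continuous fun x => b x k i - b 0 k i := by fun_prop
        simpa using this.tendsto 0) (fun k => isBigO_const_const _ one_ne_zero _) hG hG0
    simp only [one_mul] at h1
    refine h1.congr_left fun x => ?_
    simp only [W, W0, hGV]
    rw [dotProduct_comm]
    simp [mulVec, hB, transpose, dotProduct]
  have hSW : ∀ i, (fun x => (R⁻¹ *ᵥ W x) i - (R⁻¹ *ᵥ W0 x) i) =o[𝓝 0] N := by
    intro i
    have h1 := IsLittleO.sum (s := Finset.univ) (fun j _ => (hW j).const_mul_left (R⁻¹ i j))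
    refine h1.congr_left fun x => ?_
    simp [mulVec, dotProduct, mul_sub]
  have t2 := aux_dot hW hW0 hSW (aux_mulVec_bigO R⁻¹ hW0)
  have t := (t1.neg_left.add (t2.const_mul_left (1/4))).bound (half_pos hc0)
  obtain ⟨δ, hδ, hb'⟩ := Metric.eventually_nhds_iff.1 t
  obtain ⟨r, hr, hsub⟩ := aux_sub V hV.continuous hVproper hVpos δ hδ
  refine ⟨r, hr, fun χ h0 hle => ?_⟩
  have hχ : χ ≠ 0 := by
    rintro rfl
    rw [hVpos.1] at h0
    exact lt_irrefl _ h0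
  have hn : 0 < ‖χ‖ := norm_pos_iff.mpr hχ
  have hbd := hb' (y := χ) (by simpa using hsub χ hle)
  have halg := aux_alg H A Q B R⁻¹ hsymm hRiccati χ
  have hq := hc χ
  rw [Real.norm_eq_abs, Real.norm_eq_abs, abs_of_nonneg (by positivity : 0 ≤ N χ * N χ)] at hbd
  have hbd' := (abs_le.1 hbd).1
  have hpos : 0 < c * (‖χ‖ * ‖χ‖) := by positivity
  change 0 < -(fderiv ℝ V χ (a χ)) + (1/4) * (W χ ⬝ᵥ R⁻¹ *ᵥ W χ)
  rw [hGV]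
  simp only [W0, N] at hbd'
  linarith
end
end

section
/- Let V: ℝ^n → ℝ≥0 be a C¹ proper positive definite function, let a: ℝ^n → ℝ^n and b: ℝ^n → ℝ^{n×p} be continuous, and let R ∈ ℝ^{p×p} be symmetric positive definite. Assume (i) for every χ ≠ 0, ∇V(χ)ᵀb(χ) = 0 implies ∇V(χ)·a(χ) < 0, and (ii) there exists r₀ > 0 such that −∇V(χ)·a(χ) + (1/4)·(∇V(χ)ᵀb(χ)) R⁻¹ (∇V(χ)ᵀb(χ))ᵀ > 0 for all χ with 0 < V(χ) ≤ r₀. Then there exists a continuous function μ: ℝ≥0 → [1, ∞) with μ(s) = 1 for s ≤ r₀/2 such that for every χ ≠ 0, −∇V(χ)·a(χ) + (μ(V(χ))/4)·(∇V(χ)ᵀb(χ)) R⁻¹ (∇V(χ)ᵀb(χ))ᵀ > 0. -/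
open Matrix Filter Topology Asymptotics

noncomputable section

/-- Under the Artstein condition away from the origin and positivity
of `−L_aV + ¼ L_bV R⁻¹ (L_bV)ᵀ` on a small sublevel set, there is a continuous gain
`μ : ℝ≥0 → [1,∞)`, equal to `1` below `r₀/2`, making
`−L_aV + (μ(V)/4) L_bV R⁻¹ (L_bV)ᵀ` positive away from the origin. -/
theorem stmt12 {n p : ℕ}
    (V : (Fin n → ℝ) → ℝ)
    (hV : ContDiff ℝ 1 V) (hVnonneg : ∀ χ, 0 ≤ V χ)
    (hVproper : IsProper V) (hVpos : IsPosDefFn V)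
    (a : (Fin n → ℝ) → (Fin n → ℝ)) (b : (Fin n → ℝ) → Fin n → Fin p → ℝ)
    (ha : Continuous a) (hb : Continuous b)
    (R : Matrix (Fin p) (Fin p) ℝ) (hR : R.PosDef)
    (hArtstein : ∀ χ : Fin n → ℝ, χ ≠ 0 →
      (∀ i, fderiv ℝ V χ (fun k => b χ k i) = 0) → fderiv ℝ V χ (a χ) < 0)
    (r₀ : ℝ) (hr₀ : 0 < r₀)
    (hloc : ∀ χ : Fin n → ℝ, 0 < V χ → V χ ≤ r₀ →
      0 < -(fderiv ℝ V χ (a χ))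
        + (1/4) * ((fun i => fderiv ℝ V χ (fun k => b χ k i)) ⬝ᵥ
            R⁻¹.mulVec (fun i => fderiv ℝ V χ (fun k => b χ k i)))) :
    ∃ μ : NNReal → ℝ, Continuous μ ∧ (∀ s, 1 ≤ μ s) ∧
      (∀ s : NNReal, (s:ℝ) ≤ r₀ / 2 → μ s = 1) ∧
      ∀ χ : Fin n → ℝ, χ ≠ 0 →
        0 < -(fderiv ℝ V χ (a χ))
          + (μ (V χ).toNNReal / 4) * ((fun i => fderiv ℝ V χ (fun k => b χ k i)) ⬝ᵥ
              R⁻¹.mulVec (fun i => fderiv ℝ V χ (fun k => b χ k i))) := by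
  classical
  have hVc : Continuous V := hV.continuous
  have hD : Continuous (fderiv ℝ V) := hV.continuous_fderiv (by norm_num)
  set A : (Fin n → ℝ) → ℝ := fun χ => fderiv ℝ V χ (a χ) with hA
  set w : (Fin n → ℝ) → Fin p → ℝ := fun χ i => fderiv ℝ V χ (fun k => b χ k i) with hw
  set Q : (Fin n → ℝ) → ℝ := fun χ => w χ ⬝ᵥ R⁻¹.mulVec (w χ) with hQ
  have hAc : Continuous A := hD.clm_apply ha
  have hwc : Continuous w := by
    refine continuous_pi fun i => hD.clm_apply ?_
    fun_prop
  have hQc : Continuous Q := hwc.dotProduct (continuous_const.matrix_mulVec hwc)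
  have hRi : (R⁻¹).PosDef := hR.inv
  have hQ0 : ∀ χ, 0 ≤ Q χ := fun χ => by
    simpa using hRi.posSemidef.dotProduct_mulVec_nonneg (w χ)
  have hpt : ∀ χ, χ ≠ 0 → ∃ m : ℝ, 1 ≤ m ∧ 0 < -A χ + m / 4 * Q χ := by
    intro χ hχ
    by_cases h : w χ = 0
    · refine ⟨1, le_rfl, ?_⟩
      have h1 := hArtstein χ hχ (fun i => congrFun h i)
      have h2 : Q χ = 0 := by simp [hQ, h]
      rw [h2]
      change A χ < 0 at h1
      linarith
    · have hp : 0 < Q χ := by simpa using hRi.dotProduct_mulVec_pos h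
      refine ⟨1 + 4 * |A χ| / Q χ, ?_, ?_⟩
      · have : 0 ≤ 4 * |A χ| / Q χ := by positivity
        linarith
      · have h3 : (1 + 4 * |A χ| / Q χ) / 4 * Q χ = Q χ / 4 + |A χ| := by
          field_simp
        rw [h3]
        have := le_abs_self (A χ)
        linarith
  have hcomp : ∀ K : Set (Fin n → ℝ), IsCompact K → (∀ χ ∈ K, χ ≠ 0) →
      ∃ m : ℝ, 1 ≤ m ∧ ∀ χ ∈ K, 0 < -A χ + m / 4 * Q χ := by
    intro K hK hK0
    refine hK.induction_on (p := fun s => ∃ m : ℝ, 1 ≤ m ∧ ∀ χ ∈ s, 0 < -A χ + m / 4 * Q χ)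
      ⟨1, le_rfl, by simp⟩ ?_ ?_ ?_
    · rintro s t hst ⟨m, h1, h2⟩
      exact ⟨m, h1, fun χ hχ => h2 χ (hst hχ)⟩
    · rintro s t ⟨m, h1, h2⟩ ⟨m', h1', h2'⟩
      refine ⟨max m m', le_max_of_le_left h1, ?_⟩
      rintro χ (h | h)
      · have := h2 χ h
        nlinarith [hQ0 χ, le_max_left m m']
      · have := h2' χ h
        nlinarith [hQ0 χ, le_max_right m m']
    · intro χ hχ
      obtain ⟨m, h1, h2⟩ := hpt χ (hK0 χ hχ)
      have hc : Continuous fun χ => -A χ + m / 4 * Q χ := by fun_prop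
      exact ⟨_, mem_nhdsWithin_of_mem_nhds (hc.continuousAt.eventually (lt_mem_nhds h2)),
        m, h1, fun _ h => h⟩
  obtain ⟨μ, hμ⟩ := exists_continuous_forall_mem_convex_of_local_const
    (X := NNReal) (E := ℝ)
    (t := fun s => {m : ℝ | 1 ≤ m ∧ ((s : ℝ) ≤ r₀ / 2 → m = 1) ∧
      ∀ χ, χ ≠ 0 → V χ = s → 0 < -A χ + m / 4 * Q χ})
    (by
      intro s m hm m' hm' x y hx hy hxy
      obtain ⟨h1, h2, h3⟩ := hm
      obtain ⟨h1', h2', h3'⟩ := hm'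
      simp only [smul_eq_mul, Set.mem_setOf_eq]
      refine ⟨by nlinarith, fun h => by rw [h2 h, h2' h]; linarith, fun χ hχ hs => ?_⟩
      have e : -A χ + (x * m + y * m') / 4 * Q χ =
        x * (-A χ + m / 4 * Q χ) + y * (-A χ + m' / 4 * Q χ) := by
        linear_combination (A χ) * hxy
      rw [e]
      have g := h3 χ hχ hs
      have g' := h3' χ hχ hs
      rcases hx.lt_or_eq with hx | hx
      · have := mul_pos hx g
        have := mul_nonneg hy g'.le
        linarith
      · have : y = 1 := by linarith
        rw [← hx, this]; linarith)
    (by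
      intro s
      by_cases hs : (s : ℝ) < r₀
      · refine ⟨1, ?_⟩
        filter_upwards [NNReal.continuous_coe.continuousAt.eventually (gt_mem_nhds hs)] with y hy
        refine ⟨le_rfl, fun _ => rfl, fun χ hχ hVy => ?_⟩
        exact hloc χ (hVpos.2 χ hχ) (hVy ▸ hy.le)
      · push Not at hs
        have hK : IsCompact {χ | r₀ / 2 ≤ V χ ∧ V χ ≤ (s : ℝ) + 1} := by
          refine Metric.isCompact_of_isClosed_isBounded ?_ ?_
          · exact (isClosed_le continuous_const hVc).inter (isClosed_le hVc continuous_const)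
          · rw [← Bornology.isCobounded_compl_iff]
            have := hVproper.eventually (eventually_gt_atTop ((s : ℝ) + 1))
            refine Filter.mem_of_superset this ?_
            intro χ h1 h2
            exact absurd h2.2 (not_le.mpr h1)
        obtain ⟨m, h1, h2⟩ := hcomp _ hK (by
          rintro χ ⟨h, -⟩ rfl
          rw [hVpos.1] at h
          linarith)
        refine ⟨m, ?_⟩
        filter_upwards [NNReal.continuous_coe.continuousAt.eventually
            (gt_mem_nhds (show (s : ℝ) < s + 1 by linarith)),
          NNReal.continuous_coe.continuousAt.eventually
            (lt_mem_nhds (show r₀ / 2 < (s : ℝ) by linarith))] with y hy hy'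
        refine ⟨h1, fun h => absurd h (not_le.mpr hy'), fun χ hχ hVy => h2 χ ⟨?_, ?_⟩⟩
        · rw [hVy]; exact hy'.le
        · rw [hVy]; exact hy.le)
  refine ⟨μ, μ.continuous, fun s => (hμ s).1, fun s => (hμ s).2.1, fun χ hχ => ?_⟩
  exact (hμ (V χ).toNNReal).2.2 χ hχ (Real.coe_toNNReal _ (hVnonneg χ)).symm
end
end
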